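/- arXiv:2001.09236 — 9 statements merged into one kernel-verified Lean document; each statement's English description precedes it below -/
import Mathlib

section
/- The function g is monotone nondecreasing on the interval (−∞, s*] and monotone nonincreasing on the interval [s*, ∞), where s* := (a + b)/2 − c. -/
open MeasureTheory

/-!
Substituting `y = x - s` turns `g s` into the integral of `f` over the window of length `L = b - a`
with left end `u = a - s`. Sliding the window from `u` to `v` changes its integral by
`∫ y in u..v, (f (y + L) - f y)`: the right end gains what it sweeps over, the left end loses it.
By symmetry and unimodality the sign of `f (y + L) - f y` depends only on which side of `c` the
midpoint of `y` and `y + L` lies. So the turning point is `u = c - L / 2`, that is `s = s*`.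
-/

section SymmetricUnimodal

variable {α β : Type*} [AddCommGroup α] [LinearOrder α] [IsOrderedAddMonoid α] [Preorder β]
  {f : α → β} {c : α}

theorem le_of_symm_of_antitoneOn_Ici_of_le_add (hsymm : ∀ t, f (c + t) = f (c - t))
    (hanti : AntitoneOn f (Set.Ici c)) {x y : α} (hxy : x ≤ y) (hmid : c + c ≤ x + y) :
    f y ≤ f x := by
  have hcy : c ≤ y := by
    by_contra! hyc
    exact hmid.not_gt (add_lt_add (hxy.trans_lt hyc) hyc)
  obtain hcx | hxc := le_total c x
  · exact hanti hcx hcy hxy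
  · have hreflect : f (c + (c - x)) = f x := by rw [hsymm, sub_sub_cancel]
    have hle : c + (c - x) ≤ y := by rwa [← add_sub_assoc, sub_le_iff_le_add']
    exact hreflect ▸ hanti (le_add_of_nonneg_right (sub_nonneg.2 hxc)) hcy hle

theorem le_of_symm_of_antitoneOn_Ici_of_add_le (hsymm : ∀ t, f (c + t) = f (c - t))
    (hanti : AntitoneOn f (Set.Ici c)) {x y : α} (hxy : x ≤ y) (hmid : x + y ≤ c + c) :
    f x ≤ f y := by
  have hreflect (z : α) : f (c + (c - z)) = f z := by rw [hsymm, sub_sub_cancel]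
  have hmid' : c + c ≤ c + (c - y) + (c + (c - x)) := by
    have hsum : c + (c - y) + (c + (c - x)) = c + c + (c + c - (x + y)) := by abel
    exact hsum ▸ le_add_of_nonneg_right (sub_nonneg.2 hmid)
  have hle : c + (c - y) ≤ c + (c - x) := by gcongr
  simpa only [hreflect] using le_of_symm_of_antitoneOn_Ici_of_le_add hsymm hanti hle hmid'

theorem monotoneOn_Iic_of_symm_of_antitoneOn_Ici (hsymm : ∀ t, f (c + t) = f (c - t))
    (hanti : AntitoneOn f (Set.Ici c)) : MonotoneOn f (Set.Iic c) :=
  fun _ hx _ hy hxy => le_of_symm_of_antitoneOn_Ici_of_add_le hsymm hanti hxy (add_le_add hx hy)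

end SymmetricUnimodal

theorem intervalIntegrable_of_monotoneOn_Iic_of_antitoneOn_Ici {E : Type*} [NormedAddCommGroup E]
    [ConditionallyCompleteLinearOrder E] [OrderTopology E] [SecondCountableTopology E]
    {μ : Measure ℝ} [IsLocallyFiniteMeasure μ] {f : ℝ → E} {c : ℝ}
    (hmono : MonotoneOn f (Set.Iic c)) (hanti : AntitoneOn f (Set.Ici c)) (u v : ℝ) :
    IntervalIntegrable f μ u v := by
  have to_mode (w : ℝ) : IntervalIntegrable f μ w c := by
    obtain hwc | hcw := le_total w c
    · exact (hmono.mono (Set.uIcc_of_le hwc ▸ Set.Icc_subset_Iic_self)).intervalIntegrable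
    · exact (hanti.mono (Set.uIcc_of_ge hcw ▸ Set.Icc_subset_Ici_self)).intervalIntegrable
  exact (to_mode u).trans (to_mode v).symm

section SlidingWindow

theorem integral_window_sub_integral_window {E : Type*} [NormedAddCommGroup E] [NormedSpace ℝ E]
    {f : ℝ → E} (hf : ∀ u v, IntervalIntegrable f volume u v) (L u v : ℝ) :
    (∫ x in v..v + L, f x) - ∫ x in u..u + L, f x = ∫ x in u..v, (f (x + L) - f x) := by
  have hshift : IntervalIntegrable (fun x => f (x + L)) volume u v := by
    simpa only [add_sub_cancel_right] using (hf (u + L) (v + L)).comp_add_right L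
  rw [intervalIntegral.integral_interval_sub_interval_comm' (hf _ _) (hf _ _) (hf _ _),
    intervalIntegral.integral_sub hshift (hf _ _), intervalIntegral.integral_comp_add_right]

variable {f : ℝ → ℝ} {L : ℝ} {S : Set ℝ}

theorem monotoneOn_integral_window (hf : ∀ u v, IntervalIntegrable f volume u v)
    (hS : S.OrdConnected) (hle : ∀ x ∈ S, f x ≤ f (x + L)) :
    MonotoneOn (fun u => ∫ x in u..u + L, f x) S := by
  intro u hu v hv huv
  rw [← sub_nonneg, integral_window_sub_integral_window hf]
  exact intervalIntegral.integral_nonneg huv fun x hx => sub_nonneg.2 (hle x (hS.out hu hv hx))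

theorem antitoneOn_integral_window (hf : ∀ u v, IntervalIntegrable f volume u v)
    (hS : S.OrdConnected) (hle : ∀ x ∈ S, f (x + L) ≤ f x) :
    AntitoneOn (fun u => ∫ x in u..u + L, f x) S := by
  have hneg : MonotoneOn (fun u => ∫ x in u..u + L, -f x) S :=
    monotoneOn_integral_window (fun u v => (hf u v).neg) hS fun x hx => neg_le_neg (hle x hx)
  simpa only [intervalIntegral.integral_neg, neg_neg] using hneg.neg

end SlidingWindow

theorem g_unimodal_about_sstar_general
    (f : ℝ → ℝ) (c a b : ℝ)
    (hf_symm : ∀ t, f (c + t) = f (c - t))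
    (hf_anti : AntitoneOn f (Set.Ici c))
    (hab : a ≤ b)
    (g : ℝ → ℝ) (hg : ∀ s, g s = ∫ x in a..b, f (x - s))
    (sstar : ℝ) (hsstar : sstar = (a + b) / 2 - c) :
    MonotoneOn g (Set.Iic sstar) ∧ AntitoneOn g (Set.Ici sstar) := by
  have hint : ∀ u v, IntervalIntegrable f volume u v :=
    intervalIntegrable_of_monotoneOn_Iic_of_antitoneOn_Ici
      (monotoneOn_Iic_of_symm_of_antitoneOn_Ici hf_symm hf_anti) hf_anti
  have hg_window : g = (fun u => ∫ x in u..u + (b - a), f x) ∘ fun s => a - s := by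
    funext s
    rw [hg, intervalIntegral.integral_comp_sub_right, Function.comp_apply, sub_add_sub_cancel']
  have hwindow_anti : AntitoneOn (fun u => ∫ x in u..u + (b - a), f x) (Set.Ici (a - sstar)) := by
    refine antitoneOn_integral_window hint Set.ordConnected_Ici fun x hx => ?_
    rw [Set.mem_Ici] at hx
    exact le_of_symm_of_antitoneOn_Ici_of_le_add hf_symm hf_anti (by linarith) (by linarith)
  have hwindow_mono : MonotoneOn (fun u => ∫ x in u..u + (b - a), f x) (Set.Iic (a - sstar)) := by
    refine monotoneOn_integral_window hint Set.ordConnected_Iic fun x hx => ?_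
    rw [Set.mem_Iic] at hx
    exact le_of_symm_of_antitoneOn_Ici_of_add_le hf_symm hf_anti (by linarith) (by linarith)
  have hleft_end : Antitone fun s : ℝ => a - s := fun _ _ hst => sub_le_sub_left hst a
  rw [hg_window]
  exact ⟨hwindow_anti.comp (hleft_end.antitoneOn _) fun _ hs => hleft_end hs,
    hwindow_mono.comp_AntitoneOn (hleft_end.antitoneOn _) fun _ hs => hleft_end hs⟩

/-- The one-dimensional transition-probability function
`g s = ∫ x in a..b, f (x - s)` is nondecreasing on `(-∞, s*]` and
nonincreasing on `[s*, ∞)`, where `s* = (a + b)/2 - c`, whenever the noise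
density `f` is symmetric and unimodal about `c`. -/
theorem g_unimodal_about_sstar
    (f : ℝ → ℝ) (c a b : ℝ)
    (hf_nonneg : ∀ x, 0 ≤ f x)
    (hf_int : Integrable f)
    (hf_symm : ∀ t, f (c + t) = f (c - t))
    (hf_mono : MonotoneOn f (Set.Iic c))
    (hf_anti : AntitoneOn f (Set.Ici c))
    (hab : a < b)
    (g : ℝ → ℝ) (hg : ∀ s, g s = ∫ x in a..b, f (x - s))
    (sstar : ℝ) (hsstar : sstar = (a + b) / 2 - c) :
    MonotoneOn g (Set.Iic sstar) ∧ AntitoneOn g (Set.Ici sstar) :=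
  g_unimodal_about_sstar_general f c a b hf_symm hf_anti hab.le g hg sstar hsstar
end

section
/- For every s ∈ ℝ one has g(s) ≤ g(s*), where s* := (a + b)/2 − c; that is, the probability of landing in [a, b] is maximized by placing the mode of the shifted noise density at the center of [a, b]. -/
open MeasureTheory

/-!
Translate the mode to the origin, so that `f` is even and antitone on `[0, ∞)`, and let `G m` be
the integral of `f` over the window `[m - h, m + h]`. For `0 ≤ m ≤ n`, moving the window from `m`
to `n` gains `∫ x in m..n, f (x + h)` and loses `∫ x in m..n, f (x - h)`; since `|x - h| ≤ |x + h|`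
on this range, the loss dominates. Hence `G` is again even and antitone on `[0, ∞)`, and is
therefore maximal at the origin.
-/

theorem le_of_abs_le_of_even_of_antitoneOn {α β : Type*} [AddCommGroup α] [LinearOrder α]
    [IsOrderedAddMonoid α] [Preorder β] {f : α → β} (heven : Function.Even f)
    (hanti : AntitoneOn f (Set.Ici 0)) {x y : α} (hxy : |x| ≤ |y|) : f y ≤ f x := by
  have apply_abs (z : α) : f |z| = f z := by
    rcases abs_choice z with hz | hz <;> simp only [hz, heven z]
  simpa only [apply_abs] using hanti (abs_nonneg x) (abs_nonneg y) hxy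

theorem intervalIntegrable_of_even_of_antitoneOn {f : ℝ → ℝ} (heven : Function.Even f)
    (hanti : AntitoneOn f (Set.Ici 0)) (a b : ℝ) : IntervalIntegrable f volume a b := by
  refine intervalIntegrable_of_even (fun x => (heven x).symm) fun x hx =>
    (hanti.mono ?_).intervalIntegrable
  rw [Set.uIcc_of_le hx.le]
  exact Set.Icc_subset_Ici_self

/-- The integral of `f` over the window `[m - h, m + h]`, as a function of the centre `m`; the
half-width `h` comes first so that `windowIntegral f h` is the sliding integral itself. -/
noncomputable def windowIntegral {E : Type*} [NormedAddCommGroup E] [NormedSpace ℝ E]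
    (f : ℝ → E) (h m : ℝ) : E :=
  ∫ x in (m - h)..(m + h), f x

namespace windowIntegral

theorem even {E : Type*} [NormedAddCommGroup E] [NormedSpace ℝ E] {f : ℝ → E}
    (heven : Function.Even f) (h : ℝ) : Function.Even (windowIntegral f h) := fun m =>
  calc ∫ x in (-m - h)..(-m + h), f x
    _ = ∫ x in (-(m + h))..(-(m - h)), f x := by congr 1 <;> ring
    _ = ∫ x in (m - h)..(m + h), f (-x) := (intervalIntegral.integral_comp_neg f).symm
    _ = ∫ x in (m - h)..(m + h), f x := by simp only [heven _]

theorem antitoneOn {f : ℝ → ℝ} (heven : Function.Even f) (hanti : AntitoneOn f (Set.Ici 0))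
    {h : ℝ} (hh : 0 ≤ h) : AntitoneOn (windowIntegral f h) (Set.Ici 0) := by
  intro m hm n _ hmn
  have hint := intervalIntegrable_of_even_of_antitoneOn heven hanti
  have gain_le_loss : ∫ x in (m + h)..(n + h), f x ≤ ∫ x in (m - h)..(n - h), f x := by
    rw [← intervalIntegral.integral_comp_add_right, ← intervalIntegral.integral_comp_sub_right]
    have hint_add : IntervalIntegrable (fun x => f (x + h)) volume m n := by
      simpa using (hint (m + h) (n + h)).comp_add_right h
    have hint_sub : IntervalIntegrable (fun x => f (x - h)) volume m n := by
      simpa using (hint (m - h) (n - h)).comp_sub_right h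
    refine intervalIntegral.integral_mono_on hmn hint_add hint_sub fun x hx => ?_
    have hx_nonneg : 0 ≤ x := le_trans hm hx.1
    refine le_of_abs_le_of_even_of_antitoneOn heven hanti ?_
    rw [abs_of_nonneg (add_nonneg hx_nonneg hh), abs_le]
    constructor <;> linarith
  rw [← sub_nonpos]
  calc windowIntegral f h n - windowIntegral f h m
    _ = (∫ x in (m + h)..(n + h), f x) - ∫ x in (m - h)..(n - h), f x :=
      intervalIntegral.integral_interval_sub_interval_comm' (hint _ _) (hint _ _) (hint _ _)
    _ ≤ 0 := sub_nonpos.mpr gain_le_loss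

end windowIntegral

theorem integral_comp_sub_eq_windowIntegral {E : Type*} [NormedAddCommGroup E] [NormedSpace ℝ E]
    (f : ℝ → E) (c a b s : ℝ) :
    ∫ x in a..b, f (x - s) =
      windowIntegral (fun u => f (c + u)) ((b - a) / 2) ((a + b) / 2 - c - s) := by
  rw [windowIntegral, intervalIntegral.integral_comp_sub_right,
    intervalIntegral.integral_comp_add_left]
  congr 1 <;> ring

theorem g_le_g_sstar_general {f : ℝ → ℝ} {c a b : ℝ} (hf_symm : ∀ t, f (c + t) = f (c - t))
    (hf_anti : AntitoneOn f (Set.Ici c)) (hab : a ≤ b) {s t : ℝ}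
    (hst : |(a + b) / 2 - c - t| ≤ |(a + b) / 2 - c - s|) :
    ∫ x in a..b, f (x - s) ≤ ∫ x in a..b, f (x - t) := by
  have heven : Function.Even fun u => f (c + u) := fun u => by
    simpa only [sub_eq_add_neg] using (hf_symm u).symm
  have hanti : AntitoneOn (fun u => f (c + u)) (Set.Ici 0) := fun u hu v hv huv =>
    hf_anti (Set.mem_Ici.mpr (le_add_of_nonneg_right hu))
      (Set.mem_Ici.mpr (le_add_of_nonneg_right hv)) (by gcongr)
  rw [integral_comp_sub_eq_windowIntegral f c, integral_comp_sub_eq_windowIntegral f c]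
  exact le_of_abs_le_of_even_of_antitoneOn (windowIntegral.even heven _)
    (windowIntegral.antitoneOn heven hanti (by linarith)) hst

/-- The one-dimensional transition probability `g s = ∫ x in a..b, f (x - s)`
is maximized at `s* = (a + b)/2 - c`: placing the mode of the shifted noise
density at the center of `[a, b]` maximizes the probability of landing in
`[a, b]`. -/
theorem g_le_g_sstar
    (f : ℝ → ℝ) (c a b : ℝ)
    (hf_nonneg : ∀ x, 0 ≤ f x)
    (hf_int : Integrable f)
    (hf_symm : ∀ t, f (c + t) = f (c - t))
    (hf_mono : MonotoneOn f (Set.Iic c))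
    (hf_anti : AntitoneOn f (Set.Ici c))
    (hab : a < b)
    (g : ℝ → ℝ) (hg : ∀ s, g s = ∫ x in a..b, f (x - s))
    (sstar : ℝ) (hsstar : sstar = (a + b) / 2 - c) :
    ∀ s : ℝ, g s ≤ g sstar := by
  intro s
  rw [hg, hg]
  exact g_le_g_sstar_general hf_symm hf_anti hab.le (by simp [hsstar])
end

section
/- For every s ∈ [ř, r̂] one has g(s) ≤ g(s_max); consequently the maximum of g over the interval [ř, r̂] is attained at s_max (the projection of s* onto [ř, r̂]). This is the constrained upper-bound placement rule of Fact 3 (equations (16) and (18) of the paper). -/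
open MeasureTheory

/-!
Sliding the window `[a, b]` away from the position centred at the mode loses a strip on one side and
gains its translate by `±(b - a)` on the other, which is no nearer to the mode. So the window
integral is itself symmetric and unimodal, about `(a + b) / 2 - c`, and over an interval such a
function is largest at the point nearest to its centre, i.e. at the projection of the centre. All
integrals exist because a unimodal function is piecewise monotone.
-/

section Projection

variable {α : Type*} [LinearOrder α] {lo hi : α}

theorem ite_eq_coe_projIcc (h : lo ≤ hi) (x : α) :
    (if lo ≤ x ∧ x ≤ hi then x else if hi < x then hi else lo) = Set.projIcc lo hi h x := by
  rw [Set.coe_projIcc]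
  grind

theorem abs_projIcc_sub_le_abs_sub [AddCommGroup α] [IsOrderedAddMonoid α] (h : lo ≤ hi)
    {y : α} (hy : y ∈ Set.Icc lo hi) (x : α) :
    |(Set.projIcc lo hi h x : α) - x| ≤ |y - x| := by
  rcases le_total x lo with hx | hx
  · rw [Set.projIcc_of_le_left h hx]
    exact abs_le_abs_of_nonneg (sub_nonneg.2 hx) (sub_le_sub_right hy.1 x)
  rcases le_total hi x with hx' | hx'
  · rw [Set.projIcc_of_right_le h hx', abs_sub_comm, abs_sub_comm y]
    exact abs_le_abs_of_nonneg (sub_nonneg.2 hx') (sub_le_sub_left hy.2 x)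
  · rw [Set.projIcc_of_mem h ⟨hx, hx'⟩, sub_self, abs_zero]
    exact abs_nonneg _

end Projection

/-- `f` is symmetric about `c` and unimodal with mode `c`, encoded as a single condition: `f` is
antitone in the distance to `c`. -/
def IsSymmetricUnimodal {α β : Type*} [Lattice α] [AddGroup α] [LE β]
    (f : α → β) (c : α) : Prop :=
  ∀ ⦃x y : α⦄, |x - c| ≤ |y - c| → f y ≤ f x

namespace IsSymmetricUnimodal

section Order

variable {α β : Type*} [LinearOrder α] [AddCommGroup α] {f : α → β} {c : α}

theorem apply_add_eq_apply_sub [PartialOrder β] (hf : IsSymmetricUnimodal f c) (t : α) :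
    f (c + t) = f (c - t) := by
  have hdist : |c + t - c| = |c - t - c| := by
    rw [add_sub_cancel_left, sub_sub_cancel_left, abs_neg]
  exact le_antisymm (hf hdist.ge) (hf hdist.le)

variable [IsOrderedAddMonoid α]

theorem of_symm_of_antitoneOn [Preorder β] (hsymm : ∀ t, f (c + t) = f (c - t))
    (hanti : AntitoneOn f (Set.Ici c)) : IsSymmetricUnimodal f c := by
  have eval_abs (x : α) : f x = f (c + |x - c|) := by
    rcases abs_choice (x - c) with h | h <;> rw [h]
    · rw [add_sub_cancel]
    · rw [hsymm, sub_neg_eq_add, add_sub_cancel]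
  intro x y hxy
  rw [eval_abs x, eval_abs y]
  exact hanti (le_add_of_nonneg_right (abs_nonneg _)) (le_add_of_nonneg_right (abs_nonneg _))
    (add_le_add_right hxy c)

theorem antitoneOn_Ici [Preorder β] (hf : IsSymmetricUnimodal f c) : AntitoneOn f (Set.Ici c) :=
  fun _ hx _ _ hxy ↦ hf (abs_le_abs_of_nonneg (sub_nonneg.2 hx) (sub_le_sub_right hxy c))

theorem monotoneOn_Iic [Preorder β] (hf : IsSymmetricUnimodal f c) : MonotoneOn f (Set.Iic c) :=
  fun _ _ _ hy hxy ↦ hf (abs_le_abs_of_nonpos (sub_nonpos.2 hy) (sub_le_sub_right hxy c))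

theorem isMaxOn_projIcc [Preorder β] (hf : IsSymmetricUnimodal f c) {lo hi : α} (h : lo ≤ hi) :
    IsMaxOn f (Set.Icc lo hi) (Set.projIcc lo hi h c) :=
  fun _ hy ↦ hf (abs_projIcc_sub_le_abs_sub h hy c)

end Order

section Integral

variable {f : ℝ → ℝ} {c a b : ℝ}

theorem intervalIntegrable (hf : IsSymmetricUnimodal f c) (u v : ℝ) :
    IntervalIntegrable f volume u v := by
  have from_mode (w : ℝ) : IntervalIntegrable f volume c w := by
    rcases le_total c w with hw | hw
    · have hsub : Set.uIcc c w ⊆ Set.Ici c := Set.uIcc_of_le hw ▸ Set.Icc_subset_Ici_self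
      exact (hf.antitoneOn_Ici.mono hsub).intervalIntegrable
    · have hsub : Set.uIcc c w ⊆ Set.Iic c := Set.uIcc_of_ge hw ▸ Set.Icc_subset_Iic_self
      exact (hf.monotoneOn_Iic.mono hsub).intervalIntegrable
  exact (from_mode u).symm.trans (from_mode v)

theorem integral_comp_sub_symm (hf : IsSymmetricUnimodal f c) (t : ℝ) :
    ∫ x in a..b, f (x - ((a + b) / 2 - c + t)) = ∫ x in a..b, f (x - ((a + b) / 2 - c - t)) := by
  have reflect (x : ℝ) :
      f (a + b - x - ((a + b) / 2 - c + t)) = f (x - ((a + b) / 2 - c - t)) := by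
    convert (hf.apply_add_eq_apply_sub (x - (a + b) / 2 + t)).symm using 2 <;> ring
  calc ∫ x in a..b, f (x - ((a + b) / 2 - c + t))
      = ∫ x in a..b, f (a + b - x - ((a + b) / 2 - c + t)) := by
        rw [intervalIntegral.integral_comp_sub_left
          (fun x ↦ f (x - ((a + b) / 2 - c + t))), add_sub_cancel_right, add_sub_cancel_left]
    _ = ∫ x in a..b, f (x - ((a + b) / 2 - c - t)) := by simp only [reflect]

theorem antitoneOn_integral_comp_sub (hf : IsSymmetricUnimodal f c) (hab : a ≤ b) :
    AntitoneOn (fun s ↦ ∫ x in a..b, f (x - s)) (Set.Ici ((a + b) / 2 - c)) := by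
  intro u hu v _ huv
  have nearer : ∀ x ∈ Set.Icc (a - v) (a - u), f x ≤ f (x + (b - a)) := by
    intro x hx
    have hxu : x ≤ a - u := hx.2
    have hcu : (a + b) / 2 - c ≤ u := hu
    refine hf ?_
    rw [abs_of_nonpos (by linarith : x - c ≤ 0), abs_le]
    constructor <;> linarith
  have hshift : IntervalIntegrable (fun x ↦ f (x + (b - a))) volume (a - v) (a - u) := by
    simpa only [add_sub_cancel_right] using
      (hf.intervalIntegrable (a - v + (b - a)) (a - u + (b - a))).comp_add_right (b - a)
  have strip_le : ∫ x in (a - v)..(a - u), f x ≤ ∫ x in (b - v)..(b - u), f x :=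
    calc ∫ x in (a - v)..(a - u), f x
        ≤ ∫ x in (a - v)..(a - u), f (x + (b - a)) :=
          intervalIntegral.integral_mono_on (sub_le_sub_left huv a) (hf.intervalIntegrable _ _)
            hshift nearer
      _ = ∫ x in (b - v)..(b - u), f x := by
          rw [intervalIntegral.integral_comp_add_right, sub_add_sub_cancel', sub_add_sub_cancel']
  rw [← sub_nonpos]
  calc (∫ x in a..b, f (x - v)) - ∫ x in a..b, f (x - u)
      = (∫ x in (a - v)..(b - v), f x) - ∫ x in (a - u)..(b - u), f x := by
        simp only [intervalIntegral.integral_comp_sub_right]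
    _ = (∫ x in (a - v)..(a - u), f x) - ∫ x in (b - v)..(b - u), f x :=
        intervalIntegral.integral_interval_sub_interval_comm (hf.intervalIntegrable _ _)
          (hf.intervalIntegrable _ _) (hf.intervalIntegrable _ _)
    _ ≤ 0 := sub_nonpos.2 strip_le

theorem integral_comp_sub (hf : IsSymmetricUnimodal f c) (hab : a ≤ b) :
    IsSymmetricUnimodal (fun s ↦ ∫ x in a..b, f (x - s)) ((a + b) / 2 - c) :=
  of_symm_of_antitoneOn hf.integral_comp_sub_symm (hf.antitoneOn_integral_comp_sub hab)

end Integral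

end IsSymmetricUnimodal

theorem g_max_on_interval_general {f : ℝ → ℝ} {c a b : ℝ}
    (hf_symm : ∀ t, f (c + t) = f (c - t)) (hf_anti : AntitoneOn f (Set.Ici c)) (hab : a ≤ b)
    {rlo rhi : ℝ} (hr : rlo ≤ rhi) :
    IsMaxOn (fun s ↦ ∫ x in a..b, f (x - s)) (Set.Icc rlo rhi)
      (Set.projIcc rlo rhi hr ((a + b) / 2 - c)) :=
  ((IsSymmetricUnimodal.of_symm_of_antitoneOn hf_symm hf_anti).integral_comp_sub
    hab).isMaxOn_projIcc hr

/-- Constrained upper-bound placement rule (Fact 3, eqs. (16) and (18)):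
the maximum of `g` over `[ř, r̂]` is attained at `s_max`, the projection of
`s* = (a+b)/2 - c` onto `[ř, r̂]`. -/
theorem g_max_on_interval
    (f : ℝ → ℝ) (c a b : ℝ)
    (hf_nonneg : ∀ x, 0 ≤ f x)
    (hf_int : Integrable f)
    (hf_symm : ∀ t, f (c + t) = f (c - t))
    (hf_mono : MonotoneOn f (Set.Iic c))
    (hf_anti : AntitoneOn f (Set.Ici c))
    (hab : a < b)
    (g : ℝ → ℝ) (hg : ∀ s, g s = ∫ x in a..b, f (x - s))
    (sstar : ℝ) (hsstar : sstar = (a + b) / 2 - c)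
    (rlo rhi : ℝ) (hr : rlo ≤ rhi)
    (smax : ℝ)
    (hsmax : smax = if rlo ≤ sstar ∧ sstar ≤ rhi then sstar
      else if rhi < sstar then rhi else rlo) :
    smax ∈ Set.Icc rlo rhi ∧ ∀ s ∈ Set.Icc rlo rhi, g s ≤ g smax := by
  obtain rfl : g = fun s ↦ ∫ x in a..b, f (x - s) := funext hg
  rw [hsmax, ite_eq_coe_projIcc hr, hsstar]
  exact ⟨Subtype.coe_prop _, g_max_on_interval_general hf_symm hf_anti hab.le hr⟩
end

section
/- For every s ∈ ∏_{i=1}^n [ř_i + u_i, r̂_i + u_i] one has μ({y ∈ ℝⁿ : s + y ∈ ∏_{i=1}^n [a_i, b_i]}) ≥ ∏_{i=1}^n g_i(s_{i,min}); moreover the point (s_{1,min}, …, s_{n,min}) belongs to ∏_{i=1}^n [ř_i + u_i, r̂_i + u_i] and attains equality, so the infimum of the landing probability over this rectangle of positions equals ∏_{i=1}^n g_i(s_{i,min}). (This is the lower transition-probability bound of Fact 3 of the paper.) -/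
open MeasureTheory

/-! The probability of landing in a box is a product of window integrals `∫_{a}^{b} f (x - s) dx`.
Moving a window of fixed length further away from the centre `c` of a symmetric unimodal `f` trades
a piece near `c` for an equally long piece farther away, so the window integral is itself symmetric
and unimodal in `s`, about `(a + b) / 2 - c`. Each factor is thus minimized at the endpoint of its
interval of positions that is farthest from this centre. Clamping the centre to the interval first
does not change which endpoint that is. -/

/-- `f` is a decreasing function of the distance to `c`; equivalently, `f` is symmetric about `c`
and unimodal with mode `c`. Both the densities and their window integrals have this property. -/
def IsRadiallyAntitone (f : ℝ → ℝ) (c : ℝ) : Prop :=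
  ∀ ⦃x y : ℝ⦄, |x - c| ≤ |y - c| → f y ≤ f x

namespace IsRadiallyAntitone

variable {f : ℝ → ℝ} {c : ℝ}

lemma of_symm_of_antitoneOn (hsymm : ∀ t, f (c + t) = f (c - t))
    (hanti : AntitoneOn f (Set.Ici c)) : IsRadiallyAntitone f c := by
  have eq_abs (z : ℝ) : f z = f (c + |z - c|) := by
    rcases abs_choice (z - c) with h | h <;> rw [h]
    · rw [add_sub_cancel]
    · rw [hsymm, sub_neg_eq_add, add_sub_cancel]
  intro x y hxy
  rw [eq_abs x, eq_abs y]
  exact hanti (by simp) (by simp) (by gcongr)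

lemma symm (hf : IsRadiallyAntitone f c) (t : ℝ) : f (c + t) = f (c - t) :=
  le_antisymm (hf (by simp)) (hf (by simp))

lemma antitoneOn (hf : IsRadiallyAntitone f c) : AntitoneOn f (Set.Ici c) :=
  fun _ hx _ _ hxy => hf (abs_le_abs_of_nonneg (sub_nonneg.2 hx) (by gcongr))

lemma monotoneOn (hf : IsRadiallyAntitone f c) : MonotoneOn f (Set.Iic c) :=
  fun _ _ _ hy hxy => hf (abs_le_abs_of_nonpos (sub_nonpos.2 hy) (by gcongr))

lemma intervalIntegrable (hf : IsRadiallyAntitone f c) {ν : Measure ℝ}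
    [IsFiniteMeasureOnCompacts ν] (p q : ℝ) : IntervalIntegrable f ν p q := by
  have from_centre (z : ℝ) : IntervalIntegrable f ν c z := by
    rcases le_total c z with hz | hz
    · exact (hf.antitoneOn.mono (by grind [Set.uIcc_of_le])).intervalIntegrable
    · exact (hf.monotoneOn.mono (by grind [Set.uIcc_of_ge])).intervalIntegrable
  exact (from_centre p).symm.trans (from_centre q)

lemma intervalIntegral_comp_sub_symm (hf : IsRadiallyAntitone f c) (a b t : ℝ) :
    ∫ x in a..b, f (x - ((a + b) / 2 - c + t)) = ∫ x in a..b, f (x - ((a + b) / 2 - c - t)) := by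
  have hreflect (x : ℝ) :
      f (a + b - x - ((a + b) / 2 - c + t)) = f (x - ((a + b) / 2 - c - t)) := by
    convert hf.symm ((a + b) / 2 - x - t) using 2 <;> ring
  simp_rw [← hreflect]
  rw [intervalIntegral.integral_comp_sub_left
    (fun x => f (x - ((a + b) / 2 - c + t))), add_sub_cancel_right, add_sub_cancel_left]

lemma intervalIntegral_comp_sub_antitoneOn (hf : IsRadiallyAntitone f c) {a b : ℝ} (hab : a ≤ b) :
    AntitoneOn (fun s => ∫ x in a..b, f (x - s)) (Set.Ici ((a + b) / 2 - c)) := by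
  intro s hs t _ hst
  have hexchange : (∫ x in (a - s)..(b - s), f x) - ∫ x in (a - t)..(b - t), f x =
      (∫ x in (b - t)..(b - s), f x) - ∫ x in (a - t)..(a - s), f x :=
    intervalIntegral.integral_interval_sub_interval_comm' (hf.intervalIntegrable _ _)
      (hf.intervalIntegrable _ _) (hf.intervalIntegrable _ _)
  have hshift : ∫ x in (a - t)..(a - s), f (x + (b - a)) = ∫ x in (b - t)..(b - s), f x := by
    rw [intervalIntegral.integral_comp_add_right]
    congr 1 <;> ring
  have hshift_int : IntervalIntegrable (fun x => f (x + (b - a))) volume (a - t) (a - s) := by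
    simpa only [add_sub_cancel_right, enorm_ne_top, forall_const] using
      (hf.intervalIntegrable (a - t + (b - a)) (a - s + (b - a))).comp_add_right (b - a)
  have hcloser : ∫ x in (a - t)..(a - s), f x ≤ ∫ x in (a - t)..(a - s), f (x + (b - a)) := by
    refine intervalIntegral.integral_mono_on (by gcongr) (hf.intervalIntegrable _ _) hshift_int
      fun x hx => hf ?_
    have hmidpoint : (x + (x + (b - a))) / 2 ≤ c := by linarith [hx.2, Set.mem_Ici.1 hs]
    rw [← sq_le_sq]
    nlinarith
  simp only [intervalIntegral.integral_comp_sub_right]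
  linarith

theorem intervalIntegral_comp_sub (hf : IsRadiallyAntitone f c) {a b : ℝ} (hab : a ≤ b) :
    IsRadiallyAntitone (fun s => ∫ x in a..b, f (x - s)) ((a + b) / 2 - c) :=
  of_symm_of_antitoneOn (hf.intervalIntegral_comp_sub_symm a b)
    (hf.intervalIntegral_comp_sub_antitoneOn hab)

end IsRadiallyAntitone

section FarEndpoint

variable {𝕜 : Type*} [Field 𝕜] [LinearOrder 𝕜] {lo hi : 𝕜}

/-- The endpoint of `[lo, hi]` farthest from `p`; ties are resolved in favour of `hi`.
At `p = s*_i` it is the paper's `s_{i,min}`. -/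
def farEndpoint (lo hi p : 𝕜) : 𝕜 :=
  if (lo + hi) / 2 < p then lo else hi

lemma farEndpoint_mem_Icc (h : lo ≤ hi) (p : 𝕜) : farEndpoint lo hi p ∈ Set.Icc lo hi := by
  unfold farEndpoint
  split_ifs
  exacts [Set.left_mem_Icc.2 h, Set.right_mem_Icc.2 h]

variable [IsStrictOrderedRing 𝕜]

lemma farEndpoint_clamp (h : lo ≤ hi) (p : 𝕜) :
    farEndpoint lo hi (max lo (min p hi)) = farEndpoint lo hi p := by
  unfold farEndpoint
  grind

lemma abs_sub_le_abs_farEndpoint_sub {s : 𝕜} (hs : s ∈ Set.Icc lo hi) (p : 𝕜) :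
    |s - p| ≤ |farEndpoint lo hi p - p| := by
  obtain ⟨hlo, hhi⟩ := hs
  unfold farEndpoint
  grind

end FarEndpoint

lemma withDensity_ofReal_Icc {ν : Measure ℝ} [NullSingletonClass ν] {f : ℝ → ℝ}
    (hf : 0 ≤ f) {p q : ℝ} (hpq : p ≤ q) (hint : IntervalIntegrable f ν p q) :
    (ν.withDensity fun x => ENNReal.ofReal (f x)) (Set.Icc p q) =
      ENNReal.ofReal (∫ x in p..q, f x ∂ν) := by
  rw [withDensity_apply _ measurableSet_Icc, intervalIntegral.integral_of_le hpq,
    ← integral_Icc_eq_integral_Ioc, ofReal_integral_eq_lintegral_ofReal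
      ((intervalIntegrable_iff_integrableOn_Icc_of_le hpq).1 hint) (ae_of_all _ hf)]

lemma pi_withDensity_ofReal_translate_Icc {ι : Type*} [Fintype ι] {f : ι → ℝ → ℝ}
    (hf : ∀ i, 0 ≤ f i) {a b : ι → ℝ} (hab : a ≤ b) {s : ι → ℝ}
    (hint : ∀ i, IntervalIntegrable (f i) volume (a i - s i) (b i - s i)) :
    Measure.pi (fun i => volume.withDensity fun x => ENNReal.ofReal (f i x))
        {y | ∀ i, s i + y i ∈ Set.Icc (a i) (b i)} =
      ENNReal.ofReal (∏ i, ∫ x in (a i)..(b i), f i (x - s i)) := by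
  have hbox : {y | ∀ i, s i + y i ∈ Set.Icc (a i) (b i)} =
      Set.univ.pi fun i => Set.Icc (a i - s i) (b i - s i) := by
    simp only [← Set.preimage_const_add_Icc, Set.pi, Set.mem_univ, true_imp_iff, Set.mem_preimage]
  rw [hbox, Measure.pi_pi, ENNReal.ofReal_prod_of_nonneg fun i _ =>
    intervalIntegral.integral_nonneg (hab i) fun x _ => hf i _]
  refine Finset.prod_congr rfl fun i _ => ?_
  rw [intervalIntegral.integral_comp_sub_right]
  exact withDensity_ofReal_Icc (hf i) (by gcongr; exact hab i) (hint i)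

theorem lower_transition_bound_general
    {ι : Type*} [Fintype ι]
    (f : ι → ℝ → ℝ) (c a b rlo rhi u : ι → ℝ)
    (hf_nonneg : ∀ i x, 0 ≤ f i x)
    (hf_symm : ∀ i t, f i (c i + t) = f i (c i - t))
    (hf_anti : ∀ i, AntitoneOn (f i) (Set.Ici (c i)))
    (hab : ∀ i, a i ≤ b i) (hr : ∀ i, rlo i ≤ rhi i)
    (μ : Measure (ι → ℝ))
    (hμ : μ = Measure.pi fun i =>
      (volume : Measure ℝ).withDensity fun x => ENNReal.ofReal (f i x))
    (g : ι → ℝ → ℝ)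
    (hg : ∀ i s, g i s = ∫ x in (a i)..(b i), f i (x - s))
    (sstar smax smin : ι → ℝ)
    (hsstar : ∀ i, sstar i = (a i + b i) / 2 - c i)
    (hsmax : ∀ i, smax i =
      if rlo i + u i ≤ sstar i ∧ sstar i ≤ rhi i + u i then sstar i
      else if rhi i + u i < sstar i then rhi i + u i else rlo i + u i)
    (hsmin : ∀ i, smin i =
      if (rlo i + rhi i) / 2 + u i < smax i then rlo i + u i
      else rhi i + u i) :
    (∀ s : ι → ℝ, (∀ i, s i ∈ Set.Icc (rlo i + u i) (rhi i + u i)) →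
      ENNReal.ofReal (∏ i, g i (smin i)) ≤
        μ {y | ∀ i, s i + y i ∈ Set.Icc (a i) (b i)})
    ∧ (∀ i, smin i ∈ Set.Icc (rlo i + u i) (rhi i + u i))
    ∧ μ {y | ∀ i, smin i + y i ∈ Set.Icc (a i) (b i)} =
        ENNReal.ofReal (∏ i, g i (smin i)) := by
  have hf (i : ι) : IsRadiallyAntitone (f i) (c i) :=
    .of_symm_of_antitoneOn (hf_symm i) (hf_anti i)
  have hg_radial (i : ι) : IsRadiallyAntitone (g i) (sstar i) := by
    rw [hsstar, funext (hg i)]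
    exact (hf i).intervalIntegral_comp_sub (hab i)
  have hg_nonneg (i : ι) (s : ℝ) : 0 ≤ g i s := by
    rw [hg]
    exact intervalIntegral.integral_nonneg (hab i) fun x _ => hf_nonneg i _
  have hμ_box (s : ι → ℝ) : μ {y | ∀ i, s i + y i ∈ Set.Icc (a i) (b i)} =
      ENNReal.ofReal (∏ i, g i (s i)) := by
    simp only [hμ, hg]
    exact pi_withDensity_ofReal_translate_Icc hf_nonneg hab fun i =>
      (hf i).intervalIntegrable _ _
  have hr' (i : ι) : rlo i + u i ≤ rhi i + u i := by gcongr; exact hr i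
  have hsmax_clamp (i : ι) : smax i = max (rlo i + u i) (min (sstar i) (rhi i + u i)) := by
    grind
  have hsmin_far (i : ι) : smin i = farEndpoint (rlo i + u i) (rhi i + u i) (sstar i) := by
    rw [← farEndpoint_clamp (hr' i), ← hsmax_clamp, hsmin, farEndpoint]
    ring_nf
  refine ⟨fun s hs => ?_, fun i => hsmin_far i ▸ farEndpoint_mem_Icc (hr' i) _, hμ_box smin⟩
  rw [hμ_box]
  refine ENNReal.ofReal_le_ofReal (Finset.prod_le_prod (fun i _ => hg_nonneg i _) fun i _ => ?_)
  exact hg_radial i (hsmin_far i ▸ abs_sub_le_abs_farEndpoint_sub (hs i) _)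

/-- Lower transition-probability bound of Fact 3: for every position `s` in the
shifted reachable rectangle `∏ [ř_i + u_i, r̂_i + u_i]`, the probability that
`s + w` lands in the target rectangle `∏ [a_i, b_i]` is at least
`∏ g_i (s_{i,min})`, and this bound is attained at `s_min`, which belongs to
the rectangle. -/
theorem lower_transition_bound
    (n : ℕ)
    (f : Fin n → ℝ → ℝ) (c a b rlo rhi u : Fin n → ℝ)
    (hf_nonneg : ∀ i x, 0 ≤ f i x)
    (hf_int : ∀ i, Integrable (f i))
    (hf_prob : ∀ i, ∫ x, f i x = 1)
    (hf_symm : ∀ i t, f i (c i + t) = f i (c i - t))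
    (hf_mono : ∀ i, MonotoneOn (f i) (Set.Iic (c i)))
    (hf_anti : ∀ i, AntitoneOn (f i) (Set.Ici (c i)))
    (hab : ∀ i, a i < b i) (hr : ∀ i, rlo i ≤ rhi i)
    (μ : Measure (Fin n → ℝ))
    (hμ : μ = Measure.pi fun i =>
      (volume : Measure ℝ).withDensity fun x => ENNReal.ofReal (f i x))
    (g : Fin n → ℝ → ℝ)
    (hg : ∀ i s, g i s = ∫ x in (a i)..(b i), f i (x - s))
    (sstar smax smin : Fin n → ℝ)
    (hsstar : ∀ i, sstar i = (a i + b i) / 2 - c i)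
    (hsmax : ∀ i, smax i =
      if rlo i + u i ≤ sstar i ∧ sstar i ≤ rhi i + u i then sstar i
      else if rhi i + u i < sstar i then rhi i + u i else rlo i + u i)
    (hsmin : ∀ i, smin i =
      if (rlo i + rhi i) / 2 + u i < smax i then rlo i + u i
      else rhi i + u i) :
    (∀ s : Fin n → ℝ, (∀ i, s i ∈ Set.Icc (rlo i + u i) (rhi i + u i)) →
      ENNReal.ofReal (∏ i, g i (smin i)) ≤
        μ {y | ∀ i, s i + y i ∈ Set.Icc (a i) (b i)})
    ∧ (∀ i, smin i ∈ Set.Icc (rlo i + u i) (rhi i + u i))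
    ∧ μ {y | ∀ i, smin i + y i ∈ Set.Icc (a i) (b i)} =
        ENNReal.ofReal (∏ i, g i (smin i)) :=
  lower_transition_bound_general f c a b rlo rhi u hf_nonneg hf_symm hf_anti
    (fun i => (hab i).le) hr μ hμ g hg sstar smax smin hsstar hsmax hsmin
end

section
/- Let ř ≤ r̂ be reals. Then sup_{s ∈ [ř, r̂]} g(s) = 0 if and only if r̂ + ŵ ≤ a or ř + w̌ ≥ b. (This is the one-dimensional 'off' trigger-region characterization of Proposition 4 of the paper: the upper transition-probability bound from the position interval [ř, r̂] into [a, b] vanishes exactly under the stated conditions.) -/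
open MeasureTheory

/-!
Up to a null set, the noise density `f` is positive exactly on the open interval `U = (w̌, ŵ)`, so
`g s` vanishes iff the translate `U + s` misses `(a, b)`. Hence the supremum over `[ř, r̂]` vanishes
iff the Minkowski sum `U + [ř, r̂] = (w̌ + ř, ŵ + r̂)` misses `(a, b)`.
-/

open Set Function
open scoped Pointwise

theorem Ioo_disjoint_Ioo_iff_of_lt {α : Type*} [LinearOrder α] [DenselyOrdered α]
    {a b c d : α} (hab : a < b) (hcd : c < d) :
    Disjoint (Ioo a b) (Ioo c d) ↔ b ≤ c ∨ d ≤ a := by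
  simp only [Ioo_disjoint_Ioo, min_le_iff, le_max_iff, hab.not_ge, hcd.not_ge, false_or, or_comm]

theorem Ioo_add_Icc {α : Type*} [AddCommGroup α] [LinearOrder α] [IsOrderedAddMonoid α]
    [DenselyOrdered α] {a b c d : α} (hab : a < b) (hcd : c ≤ d) :
    Ioo a b + Icc c d = Ioo (a + c) (b + d) := by
  refine Subset.antisymm ?_ fun x ⟨hx_lower, hx_upper⟩ ↦ ?_
  · rintro _ ⟨u, hu, s, hs, rfl⟩
    exact ⟨add_lt_add_of_lt_of_le hu.1 hs.1, add_lt_add_of_lt_of_le hu.2 hs.2⟩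
  · obtain ⟨t, ht_lower, ht_upper⟩ := exists_between (sub_lt_sub_left hab x)
    -- Clamping `t` to `[c, d]` keeps it strictly between `x - b` and `x - a`.
    have hs_lower : x - b < max c (min d t) :=
      lt_max_of_lt_right (lt_min (sub_left_lt_of_lt_add hx_upper) ht_lower)
    have hs_upper : max c (min d t) < x - a :=
      max_lt (lt_sub_left_of_add_lt hx_lower) (min_lt_of_right_lt ht_upper)
    exact ⟨x - max c (min d t), ⟨lt_sub_comm.1 hs_upper, sub_lt_comm.1 hs_lower⟩,
      max c (min d t), ⟨le_max_left _ _, max_le hcd (min_le_left _ _)⟩, sub_add_cancel _ _⟩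

theorem sSup_image_eq_zero_iff_of_nonneg {ι : Type*} {g : ι → ℝ} {S : Set ι}
    (hg : ∀ s ∈ S, 0 ≤ g s) (hbdd : BddAbove (g '' S)) :
    sSup (g '' S) = 0 ↔ ∀ s ∈ S, g s = 0 := by
  refine ⟨fun h s hs ↦ ?_, fun h ↦ ?_⟩
  · exact le_antisymm (h ▸ le_csSup hbdd (mem_image_of_mem g hs)) (hg s hs)
  · exact le_antisymm (Real.sSup_nonpos (forall_mem_image.2 fun s hs ↦ (h s hs).le))
      (Real.sSup_nonneg (forall_mem_image.2 hg))

theorem support_ae_eq_Ioo {α E : Type*} [LinearOrder α] [MeasurableSpace α] {μ : Measure α}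
    [NullSingletonClass μ] [Zero E] {f : α → E} {a b : α} (hne : ∀ x ∈ Ioo a b, f x ≠ 0)
    (hzero : ∀ x ∉ Icc a b, f x = 0) : support f =ᵐ[μ] Ioo a b :=
  Filter.EventuallyLE.antisymm
    ((support_subset_iff'.2 hzero).eventuallyLE.trans Ioo_ae_eq_Icc.symm.le)
    (show Ioo a b ⊆ support f from hne).eventuallyLE

theorem setIntegral_eq_zero_iff_disjoint {X : Type*} [TopologicalSpace X] [MeasurableSpace X]
    [OpensMeasurableSpace X] {μ : Measure X} [μ.IsOpenPosMeasure] {f : X → ℝ} {U V : Set X}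
    (hV : IsOpen V) (hf : 0 ≤ᵐ[μ.restrict V] f) (hfi : IntegrableOn f V μ) (hU : IsOpen U)
    (hsupp : support f =ᵐ[μ] U) :
    ∫ x in V, f x ∂μ = 0 ↔ Disjoint U V := by
  calc
    ∫ x in V, f x ∂μ = 0 ↔ μ.restrict V (support f) = 0 :=
      setIntegral_eq_zero_iff_of_nonneg_ae hf hfi
    _ ↔ μ (U ∩ V) = 0 := by
      rw [Measure.restrict_apply' hV.measurableSet,
        measure_congr (hsupp.inter (Filter.EventuallyEq.refl _ V))]
    _ ↔ Disjoint U V := by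
      rw [(hU.inter hV).measure_eq_zero_iff μ, disjoint_iff_inter_eq_empty]

section Translate

variable {G : Type*} [AddGroup G] [MeasurableSpace G] {μ : Measure G} [μ.IsAddRightInvariant]
  {f : G → ℝ}

theorem ae_nonneg_comp_sub_right [MeasurableAdd G] (hf : 0 ≤ᵐ[μ] f) (s : G) :
    0 ≤ᵐ[μ] fun x ↦ f (x - s) :=
  (measurePreserving_sub_right μ s).quasiMeasurePreserving.ae hf

theorem setIntegral_comp_sub_right_le_integral [MeasurableAdd G] (hf : 0 ≤ᵐ[μ] f)
    (hfi : Integrable f μ) (V : Set G) (s : G) :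
    ∫ x in V, f (x - s) ∂μ ≤ ∫ x, f x ∂μ :=
  calc
    ∫ x in V, f (x - s) ∂μ ≤ ∫ x, f (x - s) ∂μ :=
      setIntegral_le_integral (hfi.comp_sub_right s) (ae_nonneg_comp_sub_right hf s)
    _ = ∫ x, f x ∂μ := integral_sub_right_eq_self f s

variable [TopologicalSpace G] [ContinuousAdd G] [BorelSpace G] [μ.IsOpenPosMeasure] {U V : Set G}

theorem setIntegral_comp_sub_right_eq_zero_iff (hf : 0 ≤ᵐ[μ] f) (hfi : Integrable f μ)
    (hU : IsOpen U) (hsupp : support f =ᵐ[μ] U) (hV : IsOpen V) (s : G) :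
    ∫ x in V, f (x - s) ∂μ = 0 ↔ Disjoint ((· + s) '' U) V := by
  have hsupp_translate : support (fun x ↦ f (x - s)) =ᵐ[μ] (· - s) ⁻¹' U :=
    (measurePreserving_sub_right μ s).quasiMeasurePreserving.preimage_ae_eq hsupp
  have himage : (· + s) '' U = (· - s) ⁻¹' U := by
    simp only [image_add_right, sub_eq_add_neg]
  rw [himage]
  exact setIntegral_eq_zero_iff_disjoint hV (ae_restrict_of_ae (ae_nonneg_comp_sub_right hf s))
    (hfi.comp_sub_right s).integrableOn (himage ▸ isOpenMap_add_right s U hU) hsupp_translate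

theorem sSup_setIntegral_comp_sub_right_eq_zero_iff (hf : 0 ≤ᵐ[μ] f) (hfi : Integrable f μ)
    (hU : IsOpen U) (hsupp : support f =ᵐ[μ] U) (hV : IsOpen V) (S : Set G) :
    sSup ((fun s ↦ ∫ x in V, f (x - s) ∂μ) '' S) = 0 ↔ Disjoint (U + S) V := by
  have hnonneg : ∀ s ∈ S, 0 ≤ ∫ x in V, f (x - s) ∂μ := fun s _ ↦
    integral_nonneg_of_ae (ae_restrict_of_ae (ae_nonneg_comp_sub_right hf s))
  have hbdd : BddAbove ((fun s ↦ ∫ x in V, f (x - s) ∂μ) '' S) :=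
    ⟨∫ x, f x ∂μ, forall_mem_image.2 fun s _ ↦ setIntegral_comp_sub_right_le_integral hf hfi V s⟩
  rw [sSup_image_eq_zero_iff_of_nonneg hnonneg hbdd, ← iUnion_add_right_image,
    disjoint_iUnion₂_left]
  exact forall₂_congr fun s _ ↦ setIntegral_comp_sub_right_eq_zero_iff hf hfi hU hsupp hV s

end Translate

/-- One-dimensional 'off' trigger-region characterization (Proposition 4):
the supremum of the landing probability `g` over the position interval
`[ř, r̂]` vanishes iff `r̂ + ŵ ≤ a` or `ř + w̌ ≥ b`. -/
theorem off_trigger_one_dim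
    (wlo whi : ℝ) (hw : wlo < whi)
    (f : ℝ → ℝ)
    (hf_nonneg : ∀ x, 0 ≤ f x)
    (hf_int : Integrable f)
    (hf_supp : ∀ x, x ∉ Set.Icc wlo whi → f x = 0)
    (hf_pos : ∀ x ∈ Set.Ioo wlo whi, 0 < f x)
    (a b : ℝ) (hab : a < b)
    (g : ℝ → ℝ) (hg : ∀ s, g s = ∫ x in a..b, f (x - s))
    (rlo rhi : ℝ) (hr : rlo ≤ rhi) :
    sSup (g '' Set.Icc rlo rhi) = 0 ↔ (rhi + whi ≤ a ∨ b ≤ rlo + wlo) := by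
  have hsupp : support f =ᵐ[volume] Ioo wlo whi :=
    support_ae_eq_Ioo (fun x hx ↦ (hf_pos x hx).ne') hf_supp
  have hg_eq : g = fun s ↦ ∫ x in Ioo a b, f (x - s) := by
    funext s
    rw [hg, intervalIntegral.integral_of_le hab.le, integral_Ioc_eq_integral_Ioo]
  calc
    sSup (g '' Icc rlo rhi) = 0 ↔ Disjoint (Ioo wlo whi + Icc rlo rhi) (Ioo a b) := by
      rw [hg_eq]
      exact sSup_setIntegral_comp_sub_right_eq_zero_iff (ae_of_all _ hf_nonneg) hf_int isOpen_Ioo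
        hsupp isOpen_Ioo _
    _ ↔ whi + rhi ≤ a ∨ b ≤ wlo + rlo := by
      rw [Ioo_add_Icc hw hr, Ioo_disjoint_Ioo_iff_of_lt (add_lt_add_of_lt_of_le hw hr) hab]
    _ ↔ rhi + whi ≤ a ∨ b ≤ rlo + wlo := by
      rw [add_comm whi, add_comm wlo]
end

section
/- Let ř ≤ r̂ be reals. Then inf_{s ∈ [ř, r̂]} g(s) > 0 if and only if ř + ŵ > a and r̂ + w̌ < b. (This is the one-dimensional 'on' trigger-region characterization of Proposition 4 of the paper: the lower transition-probability bound from the position interval [ř, r̂] into [a, b] is strictly positive exactly under the stated conditions.) -/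
open MeasureTheory

/-!
Translating the integral, `g s` is the mass that `f` gives to the window `[a - s, b - s]`. As the
support of `f` is `(w̌, ŵ)` up to a null set, this mass is positive exactly when the window
overlaps `(w̌, ŵ)` in an interval of positive length, that is, when `a < s + ŵ` and `s + w̌ < b`.
Since `g` is continuous, its infimum over a compact set of positions is attained, so it is
positive exactly when these inequalities hold at every position; each of them is tightest at an
extreme position.
-/

open Set Function

lemma ae_eq_Ioo_of_subset_Icc {α : Type*} [PartialOrder α] [MeasurableSpace α] {μ : Measure α}
    [NullSingletonClass μ] {u v : α} {s : Set α} (hs : Ioo u v ⊆ s) (hs' : s ⊆ Icc u v) :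
    s =ᵐ[μ] Ioo u v :=
  (hs'.eventuallyLE.trans Ioo_ae_eq_Icc.symm.le).antisymm hs.eventuallyLE

lemma intervalIntegral_pos_iff_of_support_ae_eq_Ioo {μ : Measure ℝ} [NullSingletonClass μ]
    [μ.IsOpenPosMeasure] {f : ℝ → ℝ} {u v c d : ℝ} (hf_nonneg : 0 ≤ᵐ[μ] f)
    (hf_int : IntervalIntegrable f μ u v) (hf_supp : support f =ᵐ[μ] Ioo c d) :
    0 < ∫ x in u..v, f x ∂μ ↔ max c u < min d v := by
  have measure_overlap : μ (support f ∩ Ioc u v) = μ (Ioo (max c u) (min d v)) := by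
    rw [measure_congr (hf_supp.inter Ioo_ae_eq_Ioc.symm), Ioo_inter_Ioo]
  rw [intervalIntegral.integral_pos_iff_support_of_nonneg_ae hf_nonneg hf_int, measure_overlap,
    isOpen_Ioo.measure_pos_iff μ, nonempty_Ioo, and_iff_right_iff_imp]
  exact fun h ↦ (le_max_right c u).trans_lt (h.trans_le (min_le_right d v))

lemma continuous_intervalIntegral_comp_sub_right {E : Type*} [NormedAddCommGroup E]
    [NormedSpace ℝ E] {f : ℝ → E} (hf : ∀ u v, IntervalIntegrable f volume u v) (a b : ℝ) :
    Continuous fun s ↦ ∫ x in a..b, f (x - s) := by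
  have primitive_sub (s : ℝ) :
      ∫ x in a..b, f (x - s) = (∫ x in (0 : ℝ)..(b - s), f x) - ∫ x in (0 : ℝ)..(a - s), f x := by
    rw [intervalIntegral.integral_comp_sub_right,
      intervalIntegral.integral_interval_sub_left (hf _ _) (hf _ _)]
  have hF : Continuous fun y ↦ ∫ x in (0 : ℝ)..y, f x := intervalIntegral.continuous_primitive hf 0
  simp only [primitive_sub]
  fun_prop

theorem on_trigger_one_dim_general {wlo whi : ℝ} (hw : wlo < whi) {f : ℝ → ℝ}
    (hf_nonneg : 0 ≤ᵐ[volume] f) (hf_int : Integrable f)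
    (hf_supp : support f =ᵐ[volume] Ioo wlo whi) {a b : ℝ} (hab : a < b)
    {g : ℝ → ℝ} (hg : ∀ s, g s = ∫ x in a..b, f (x - s))
    {K : Set ℝ} (hK : IsCompact K) (hK_ne : K.Nonempty) :
    0 < sInf (g '' K) ↔ a < sInf K + whi ∧ sSup K + wlo < b := by
  have hf (u v : ℝ) : IntervalIntegrable f volume u v := hf_int.intervalIntegrable
  have g_continuous : Continuous g :=
    funext hg ▸ continuous_intervalIntegral_comp_sub_right hf a b
  have overlap_iff (s : ℝ) :
      max wlo (a - s) < min whi (b - s) ↔ a - whi < s ∧ s < b - wlo := by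
    grind
  have g_pos_iff (s : ℝ) : 0 < g s ↔ a - whi < s ∧ s < b - wlo := by
    rw [hg, intervalIntegral.integral_comp_sub_right,
      intervalIntegral_pos_iff_of_support_ae_eq_Ioo hf_nonneg (hf _ _) hf_supp,
      overlap_iff]
  have lt_sInf_iff : a - whi < sInf K ↔ ∀ s ∈ K, a - whi < s := by
    simpa only [id, image_id'] using hK.lt_sInf_iff_of_continuous hK_ne continuousOn_id (a - whi)
  have sSup_lt_iff : sSup K < b - wlo ↔ ∀ s ∈ K, s < b - wlo := by
    simpa only [id, image_id'] using hK.sSup_lt_iff_of_continuous hK_ne continuousOn_id (b - wlo)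
  calc 0 < sInf (g '' K)
    _ ↔ ∀ s ∈ K, 0 < g s := hK.lt_sInf_iff_of_continuous hK_ne g_continuous.continuousOn 0
    _ ↔ ∀ s ∈ K, a - whi < s ∧ s < b - wlo := by simp only [g_pos_iff]
    _ ↔ a - whi < sInf K ∧ sSup K < b - wlo := by
      rw [lt_sInf_iff, sSup_lt_iff, ← forall₂_and]
    _ ↔ a < sInf K + whi ∧ sSup K + wlo < b := by rw [sub_lt_iff_lt_add, lt_sub_iff_add_lt]

/-- One-dimensional 'on' trigger-region characterization (Proposition 4):
the infimum of the landing probability `g` over the position interval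
`[ř, r̂]` is strictly positive iff `ř + ŵ > a` and `r̂ + w̌ < b`. -/
theorem on_trigger_one_dim
    (wlo whi : ℝ) (hw : wlo < whi)
    (f : ℝ → ℝ)
    (hf_nonneg : ∀ x, 0 ≤ f x)
    (hf_int : Integrable f)
    (hf_supp : ∀ x, x ∉ Set.Icc wlo whi → f x = 0)
    (hf_pos : ∀ x ∈ Set.Ioo wlo whi, 0 < f x)
    (a b : ℝ) (hab : a < b)
    (g : ℝ → ℝ) (hg : ∀ s, g s = ∫ x in a..b, f (x - s))
    (rlo rhi : ℝ) (hr : rlo ≤ rhi) :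
    0 < sInf (g '' Set.Icc rlo rhi) ↔ a < rlo + whi ∧ rhi + wlo < b := by
  have supp_ae_eq : support f =ᵐ[volume] Ioo wlo whi :=
    ae_eq_Ioo_of_subset_Icc (fun x hx ↦ (hf_pos x hx).ne') (support_subset_iff'.2 hf_supp)
  simpa only [csInf_Icc hr, csSup_Icc hr] using on_trigger_one_dim_general hw
    (.of_forall hf_nonneg) hf_int supp_ae_eq hab hg isCompact_Icc (nonempty_Icc.2 hr)
end

section
/- For every u ∈ ℝⁿ, sup_{s ∈ ∏_{k=1}^n [ř_k + u_k, r̂_k + u_k]} μ({y ∈ ℝⁿ : s + y ∈ ∏_{k=1}^n [a_k, b_k]}) = 0 if and only if there exists a coordinate k such that r̂_k + u_k + ŵ_k ≤ a_k or ř_k + u_k + w̌_k ≥ b_k. (This is the 'off' trigger-region characterization of Proposition 4 of the paper.) -/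
open MeasureTheory

/- For fixed `s` the measure of the target rectangle is the product of the one-dimensional measures
of the intervals `[a_k - s_k, b_k - s_k]`, and the `s_k` range independently, so the supremum
vanishes iff some single factor vanishes for every admissible `s_k`. The `k`-th factor vanishes
iff `[a_k - s_k, b_k - s_k]` misses the open interval `(w̌_k, ŵ_k)` that carries the `k`-th law,
that is, iff `s_k` lies outside `(a_k - ŵ_k, b_k - w̌_k)`. A nonempty closed interval of values
`s_k` avoids this nonempty open interval iff it lies entirely on one side of it. -/

theorem disjoint_Icc_Ioo_iff {α : Type*} [LinearOrder α] [DenselyOrdered α] {a b c d : α}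
    (hab : a ≤ b) (hcd : c < d) :
    Disjoint (Set.Icc a b) (Set.Ioo c d) ↔ b ≤ c ∨ d ≤ a := by
  rw [Set.disjoint_left]
  refine ⟨fun h => ?_, ?_⟩
  · by_contra! ⟨hcb, had⟩
    rcases lt_or_ge b d with hbd | hdb
    · exact h (Set.right_mem_Icc.2 hab) ⟨hcb, hbd⟩
    rcases lt_or_ge c a with hca | hac
    · exact h (Set.left_mem_Icc.2 hab) ⟨hca, had⟩
    obtain ⟨x, hcx, hxd⟩ := exists_between hcd
    exact h ⟨hac.trans hcx.le, hxd.le.trans hdb⟩ ⟨hcx, hxd⟩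
  · rintro (hbc | hda) x ⟨hax, hxb⟩ ⟨hcx, hxd⟩
    · exact (hxb.trans hbc).not_gt hcx
    · exact (hda.trans hax).not_gt hxd

section Density

variable {X : Type*} [MeasurableSpace X] {μ : Measure X} {g : X → ENNReal}

theorem ae_withDensity_mem_Ioo [PartialOrder X] [NullSingletonClass μ] {a b : X}
    (hg : AEMeasurable g μ) (h : ∀ x ∉ Set.Icc a b, g x = 0) :
    ∀ᵐ x ∂μ.withDensity g, x ∈ Set.Ioo a b := by
  rw [ae_withDensity_iff' hg]
  filter_upwards [(Ioo_ae_eq_Icc (μ := μ) (a := a) (b := b)).mem_iff] with x hx hgx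
  exact hx.2 (not_imp_comm.1 (h x) hgx)

theorem subset_support_withDensity_of_isOpen [TopologicalSpace X] [μ.IsOpenPosMeasure]
    {U : Set X} (hU : IsOpen U) (hg : AEMeasurable g μ) (h : ∀ x ∈ U, g x ≠ 0) :
    U ⊆ (μ.withDensity g).support := by
  intro x hx
  refine (Measure.mem_support_iff_forall x).2 fun V hV => pos_iff_ne_zero.2 fun hV_null => ?_
  rw [withDensity_apply_eq_zero' hg] at hV_null
  exact (μ.measure_pos_of_mem_nhds (Filter.inter_mem (hU.mem_nhds hx) hV)).ne'
    (measure_mono_null (Set.inter_subset_inter_left V h) hV_null)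

end Density

section Interval

variable {α : Type*} [LinearOrder α] [DenselyOrdered α] [TopologicalSpace α] [OrderTopology α]
  [MeasurableSpace α] {ν : Measure α} {lo hi a b : α}

theorem measure_Icc_eq_zero_iff (hlt : lo < hi) (hν_ae : ∀ᵐ x ∂ν, x ∈ Set.Ioo lo hi)
    (hν_supp : Set.Ioo lo hi ⊆ ν.support) (hab : a < b) :
    ν (Set.Icc a b) = 0 ↔ hi ≤ a ∨ b ≤ lo := by
  refine ⟨fun h => ?_, fun h => ?_⟩
  · by_contra! ⟨ha, hb⟩
    obtain ⟨x, hx, hx'⟩ := exists_between (max_lt (lt_min hab ha) (lt_min hb hlt))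
    rw [max_lt_iff] at hx
    rw [lt_min_iff] at hx'
    have hx_supp : x ∈ ν.support := hν_supp ⟨hx.2, hx'.2⟩
    exact ((Measure.mem_support_iff_forall x).1 hx_supp _ (Icc_mem_nhds hx.1 hx'.1)).ne' h
  · refine measure_mono_null (t := {x | x ∉ Set.Ioo lo hi}) (fun x hx hx' => ?_) hν_ae
    rcases h with h | h
    · exact (h.trans hx.1).not_gt hx'.2
    · exact (hx.2.trans h).not_gt hx'.1

theorem measure_const_add_mem_Icc_eq_zero_iff [AddCommGroup α] [IsOrderedAddMonoid α]
    (hlt : lo < hi) (hν_ae : ∀ᵐ x ∂ν, x ∈ Set.Ioo lo hi) (hν_supp : Set.Ioo lo hi ⊆ ν.support)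
    (hab : a < b) (t : α) :
    ν {y | t + y ∈ Set.Icc a b} = 0 ↔ t ∉ Set.Ioo (a - hi) (b - lo) := by
  change ν ((t + ·) ⁻¹' Set.Icc a b) = 0 ↔ _
  rw [Set.preimage_const_add_Icc, measure_Icc_eq_zero_iff hlt hν_ae hν_supp (by gcongr),
    le_sub_comm, sub_le_comm, Set.mem_Ioo, not_and_or, not_lt, not_lt]

end Interval

theorem forall_exists_iff_exists_forall_mem {ι : Type*} {S : ι → Type*} {T : ∀ i, Set (S i)}
    (p : ∀ i, S i → Prop) :
    (∀ s : ∀ i, S i, (∀ i, s i ∈ T i) → ∃ i, p i (s i)) ↔ ∃ i, ∀ t ∈ T i, p i t := by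
  have h := Set.disjoint_univ_pi (t₁ := T) (t₂ := fun i => {t | ¬ p i t})
  simpa [Set.disjoint_left] using h

theorem iSup_measure_pi_eq_zero_iff {ι : Type*} [Fintype ι] {S X : ι → Type*}
    [∀ i, MeasurableSpace (X i)] (ν : ∀ i, Measure (X i)) [∀ i, SigmaFinite (ν i)]
    (T : ∀ i, Set (S i)) (B : ∀ i, S i → Set (X i)) :
    (⨆ s ∈ {s : ∀ i, S i | ∀ i, s i ∈ T i}, Measure.pi ν {x | ∀ i, x i ∈ B i (s i)}) = 0 ↔
      ∃ i, ∀ t ∈ T i, ν i (B i t) = 0 := by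
  have hpi (s : ∀ i, S i) :
      Measure.pi ν {x | ∀ i, x i ∈ B i (s i)} = ∏ i, ν i (B i (s i)) := by
    rw [← Measure.pi_pi, Set.pi]
    simp only [Set.mem_univ, true_imp_iff]
  simp only [ENNReal.iSup_eq_zero, Set.mem_ofPred_eq, hpi, Finset.prod_eq_zero_iff,
    Finset.mem_univ, true_and]
  exact forall_exists_iff_exists_forall_mem fun i t => ν i (B i t) = 0

theorem off_trigger_region_general {ι α : Type*} [Fintype ι] [AddCommGroup α] [LinearOrder α]
    [IsOrderedAddMonoid α] [DenselyOrdered α] [TopologicalSpace α] [OrderTopology α]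
    [MeasurableSpace α] {wlo whi a b rlo rhi : ι → α} {ν : ι → Measure α}
    [∀ k, SigmaFinite (ν k)] (hw : ∀ k, wlo k < whi k)
    (hν_ae : ∀ k, ∀ᵐ x ∂ν k, x ∈ Set.Ioo (wlo k) (whi k))
    (hν_supp : ∀ k, Set.Ioo (wlo k) (whi k) ⊆ (ν k).support)
    (hab : ∀ k, a k < b k) (hr : ∀ k, rlo k ≤ rhi k) :
    (⨆ s ∈ {s : ι → α | ∀ k, s k ∈ Set.Icc (rlo k) (rhi k)},
        Measure.pi ν {y | ∀ k, s k + y k ∈ Set.Icc (a k) (b k)}) = 0 ↔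
      ∃ k, rhi k + whi k ≤ a k ∨ b k ≤ rlo k + wlo k := by
  refine (iSup_measure_pi_eq_zero_iff ν (fun k => Set.Icc (rlo k) (rhi k))
    (fun k t => {y | t + y ∈ Set.Icc (a k) (b k)})).trans (exists_congr fun k => ?_)
  simp_rw [measure_const_add_mem_Icc_eq_zero_iff (hw k) (hν_ae k) (hν_supp k) (hab k)]
  rw [← Set.disjoint_left, disjoint_Icc_Ioo_iff (hr k) (sub_lt_sub (hab k) (hw k)),
    le_sub_iff_add_le, sub_le_iff_le_add]

/-- 'Off' trigger-region characterization (Proposition 4): the upper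
transition-probability bound from the shifted position rectangle
`∏ [ř_k + u_k, r̂_k + u_k]` into the target rectangle `∏ [a_k, b_k]` vanishes
iff for some coordinate `k`, `r̂_k + u_k + ŵ_k ≤ a_k` or
`ř_k + u_k + w̌_k ≥ b_k`. -/
theorem off_trigger_region
    (n : ℕ)
    (wlo whi : Fin n → ℝ) (hw : ∀ k, wlo k < whi k)
    (f : Fin n → ℝ → ℝ)
    (hf_nonneg : ∀ k x, 0 ≤ f k x)
    (hf_int : ∀ k, Integrable (f k))
    (hf_prob : ∀ k, ∫ x, f k x = 1)
    (hf_supp : ∀ k x, x ∉ Set.Icc (wlo k) (whi k) → f k x = 0)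
    (hf_pos : ∀ k, ∀ x ∈ Set.Ioo (wlo k) (whi k), 0 < f k x)
    (a b rlo rhi : Fin n → ℝ)
    (hab : ∀ k, a k < b k) (hr : ∀ k, rlo k ≤ rhi k)
    (μ : Measure (Fin n → ℝ))
    (hμ : μ = Measure.pi fun k =>
      (volume : Measure ℝ).withDensity fun x => ENNReal.ofReal (f k x)) :
    ∀ u : Fin n → ℝ,
      (⨆ s ∈ {s : Fin n → ℝ | ∀ k, s k ∈ Set.Icc (rlo k + u k) (rhi k + u k)},
        μ {y | ∀ k, s k + y k ∈ Set.Icc (a k) (b k)}) = 0 ↔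
      ∃ k, rhi k + u k + whi k ≤ a k ∨ b k ≤ rlo k + u k + wlo k := by
  have hf_meas (k) := (hf_int k).1.aemeasurable.ennreal_ofReal
  exact fun u => hμ ▸ off_trigger_region_general hw
    (fun k => ae_withDensity_mem_Ioo (hf_meas k) fun x hx => by simp [hf_supp k x hx])
    (fun k => subset_support_withDensity_of_isOpen isOpen_Ioo (hf_meas k)
      fun x hx => (ENNReal.ofReal_pos.2 (hf_pos k x hx)).ne')
    hab (fun k => add_le_add_left (hr k) (u k))
end

section
/- Set c_k := (w̌_k + ŵ_k)/2 for each k. For every u ∈ ℝⁿ, inf_{s ∈ ∏_{k=1}^n [ř_k + u_k, r̂_k + u_k]} μ({y ∈ ℝⁿ : s + y ∈ ∏_{k=1}^n [a_k, b_k]}) > 0 if and only if for every coordinate k: either ((ř_k + r̂_k)/2 + u_k ≥ (a_k + b_k)/2 − c_k and r̂_k + u_k + w̌_k < b_k) or ((ř_k + r̂_k)/2 + u_k ≤ (a_k + b_k)/2 − c_k and ř_k + u_k + ŵ_k > a_k). (This is the 'on' trigger-region characterization of Proposition 4 of the paper, with strict inequalities at the boundary of the noise support.) -/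
open MeasureTheory

/-!
Since the factors have no atoms, the closed target rectangle may be replaced by its interior. For a
compact set of parameters and an open target, the infimum is positive as soon as every single
parameter gives positive mass, that is, as soon as every translate of the support of `μ` meets the
interior of the target. The support of `μ` is the rectangle `∏ [w̌_k, ŵ_k]`, so this is the pair
of inequalities `a_k < ř_k + u_k + ŵ_k` and `r̂_k + u_k + w̌_k < b_k` for each `k`. Comparing
midpoints tells which of the two is the stronger one, and this is the one the trigger condition asks
for.
-/

open Set Topology

section Support

variable {X Y : Type*} [TopologicalSpace X] [TopologicalSpace Y] [MeasurableSpace Y]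

lemma exists_nhds_forall_le_measure_section {ν : Measure Y} {W : Set (X × Y)} (hW : IsOpen W)
    {x : X} (hx : ({y | (x, y) ∈ W} ∩ ν.support).Nonempty) :
    ∃ V ∈ 𝓝 x, ∃ δ > 0, ∀ x' ∈ V, δ ≤ ν {y | (x', y) ∈ W} := by
  obtain ⟨y, hxy, hy⟩ := hx
  obtain ⟨V, hV, T, hT, hVT⟩ := mem_nhds_prod_iff.1 (hW.mem_nhds hxy)
  exact ⟨V, hV, ν T, (Measure.mem_support_iff_forall y).1 hy T hT,
    fun x' hx' ↦ measure_mono fun y' hy' ↦ hVT ⟨hx', hy'⟩⟩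

lemma exists_forall_le_measure_section {ν : Measure Y} {W : Set (X × Y)} (hW : IsOpen W)
    {K : Set X} (hK : IsCompact K) (h : ∀ x ∈ K, ({y | (x, y) ∈ W} ∩ ν.support).Nonempty) :
    ∃ δ > 0, ∀ x ∈ K, δ ≤ ν {y | (x, y) ∈ W} := by
  refine hK.induction_on (p := fun S ↦ ∃ δ > 0, ∀ x ∈ S, δ ≤ ν {y | (x, y) ∈ W})
    ⟨1, one_pos, by simp⟩ ?mono ?union ?nhds
  case mono =>
    rintro S T hST ⟨δ, hδ, hT⟩
    exact ⟨δ, hδ, fun x hx ↦ hT x (hST hx)⟩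
  case union =>
    rintro S T ⟨δ, hδ, hS⟩ ⟨ε, hε, hT⟩
    exact ⟨min δ ε, lt_min hδ hε, fun x hx ↦
      hx.elim (fun hxS ↦ min_le_of_left_le (hS x hxS)) fun hxT ↦ min_le_of_right_le (hT x hxT)⟩
  case nhds =>
    intro x hx
    obtain ⟨V, hV, hbound⟩ := exists_nhds_forall_le_measure_section hW (h x hx)
    exact ⟨V, mem_nhdsWithin_of_mem_nhds hV, hbound⟩

theorem iInf_measure_section_pos_iff [HereditarilyLindelofSpace Y] {ν : Measure Y}
    {W : Set (X × Y)} (hW : IsOpen W) {K : Set X} (hK : IsCompact K) :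
    0 < ⨅ x ∈ K, ν {y | (x, y) ∈ W} ↔ ∀ x ∈ K, ({y | (x, y) ∈ W} ∩ ν.support).Nonempty := by
  refine ⟨fun h x hx ↦ Measure.nonempty_inter_support_of_pos (h.trans_le (iInf₂_le x hx)),
    fun h ↦ ?_⟩
  obtain ⟨δ, hδ, hle⟩ := exists_forall_le_measure_section hW hK h
  exact hδ.trans_le (le_iInf₂ hle)

theorem support_measure_pi {ι : Type*} [Fintype ι] {E : ι → Type*} [∀ i, TopologicalSpace (E i)]
    [∀ i, MeasurableSpace (E i)] (ν : ∀ i, Measure (E i)) [∀ i, SigmaFinite (ν i)] :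
    (Measure.pi ν).support = univ.pi fun i ↦ (ν i).support := by
  ext x
  simp only [mem_univ_pi, Measure.mem_support_iff_forall]
  constructor
  · intro hx i U hU
    have hcylinder := hx (Function.eval i ⁻¹' U) ((continuous_apply i).continuousAt hU)
    exact pos_iff_ne_zero.2 fun hnull ↦ hcylinder.ne' (Measure.pi_eval_preimage_null ν hnull)
  · intro hx U hU
    rw [nhds_pi, Filter.mem_pi] at hU
    obtain ⟨I, -, t, ht, htU⟩ := hU
    calc 0 < ∏ i, ν i (t i) :=
          pos_iff_ne_zero.2 (Finset.prod_ne_zero_iff.2 fun i _ ↦ (hx i (t i) (ht i)).ne')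
      _ = Measure.pi ν (univ.pi t) := (Measure.pi_pi ν t).symm
      _ ≤ Measure.pi ν U :=
          measure_mono ((pi_mono' (fun _ _ ↦ Subset.rfl) (subset_univ I)).trans htU)

lemma support_withDensity_subset_tsupport [OpensMeasurableSpace Y] (ν : Measure Y)
    (g : Y → ENNReal) : (ν.withDensity g).support ⊆ tsupport g := by
  have hC : IsClosed (tsupport g) := isClosed_tsupport g
  refine Measure.support_subset_of_isClosed hC ?_
  rw [mem_ae_iff, withDensity_apply _ hC.measurableSet.compl,
    setLIntegral_congr_fun hC.measurableSet.compl fun y hy ↦ image_eq_zero_of_notMem_tsupport hy,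
    lintegral_zero]

lemma subset_support_withDensity {ν : Measure Y} [ν.IsOpenPosMeasure] {g : Y → ENNReal}
    (hg : AEMeasurable g ν) {U : Set Y} (hU : IsOpen U) (hpos : ∀ y ∈ U, g y ≠ 0) :
    U ⊆ (ν.withDensity g).support := by
  refine fun y hy ↦ (Measure.mem_support_iff_forall y).2 fun V hV ↦ pos_iff_ne_zero.2 fun hnull ↦ ?_
  rw [withDensity_apply_eq_zero' hg] at hnull
  have hUV : ν (U ∩ V) = 0 := measure_mono_null (inter_subset_inter_left V hpos) hnull
  exact (ν.measure_pos_of_mem_nhds (Filter.inter_mem (hU.mem_nhds hy) hV)).ne' hUV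

theorem support_withDensity_eq_Icc [LinearOrder Y] [OrderTopology Y] [DenselyOrdered Y]
    [OpensMeasurableSpace Y] {ν : Measure Y} [ν.IsOpenPosMeasure] {g : Y → ENNReal}
    (hg : AEMeasurable g ν) {lo hi : Y} (hlt : lo < hi) (hzero : ∀ y ∉ Icc lo hi, g y = 0)
    (hpos : ∀ y ∈ Ioo lo hi, g y ≠ 0) : (ν.withDensity g).support = Icc lo hi := by
  apply Subset.antisymm
  · exact (support_withDensity_subset_tsupport ν g).trans
      (closure_minimal (Function.support_subset_iff'.2 hzero) isClosed_Icc)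
  · rw [← closure_Ioo hlt.ne]
    exact closure_minimal (subset_support_withDensity hg isOpen_Ioo hpos) Measure.isClosed_support

end Support

section Rectangle

variable {ι 𝕜 : Type*} [Field 𝕜] [LinearOrder 𝕜] [IsStrictOrderedRing 𝕜]

lemma exists_add_mem_Ioo_iff {lo hi a b : 𝕜} (hle : lo ≤ hi) (hab : a < b) (s : 𝕜) :
    (∃ y ∈ Icc lo hi, s + y ∈ Ioo a b) ↔ a < s + hi ∧ s + lo < b := by
  constructor
  · rintro ⟨y, ⟨hlo, hhi⟩, ha, hb⟩
    constructor <;> linarith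
  · rintro ⟨ha, hb⟩
    obtain ⟨z, haz, hz⟩ : ∃ z, a - s < z ∧ z < min (b - s) hi :=
      exists_between (lt_min (by linarith) (by linarith))
    obtain ⟨hzb, hzhi⟩ := lt_min_iff.1 hz
    have hlow : a - s < max lo z := haz.trans_le (le_max_right lo z)
    have hupp : max lo z < b - s := max_lt (by linarith) hzb
    exact ⟨max lo z, ⟨le_max_left lo z, max_le hle hzhi.le⟩, by linarith, by linarith⟩

lemma forall_Icc_exists_add_mem_Ioo_iff {l h lo hi a b : ι → 𝕜} (hlh : l ≤ h)
    (hle : lo ≤ hi) (hab : ∀ k, a k < b k) :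
    (∀ s ∈ Icc l h, ∃ y ∈ Icc lo hi, ∀ k, s k + y k ∈ Ioo (a k) (b k)) ↔
      ∀ k, a k < l k + hi k ∧ h k + lo k < b k := by
  constructor
  · intro H k
    obtain ⟨y, hy, hly⟩ := H l ⟨le_rfl, hlh⟩
    obtain ⟨z, hz, hhz⟩ := H h ⟨hlh, le_rfl⟩
    exact ⟨by linarith [(hly k).1, hy.2 k], by linarith [(hhz k).2, hz.1 k]⟩
  · rintro H s ⟨hls, hsh⟩
    have hcoord (k : ι) : ∃ y ∈ Icc (lo k) (hi k), s k + y ∈ Ioo (a k) (b k) :=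
      (exists_add_mem_Ioo_iff (hle k) (hab k) (s k)).2
        ⟨by linarith [(H k).1, hls k], by linarith [(H k).2, hsh k]⟩
    choose y hy hsy using hcoord
    exact ⟨y, ⟨fun k ↦ (hy k).1, fun k ↦ (hy k).2⟩, hsy⟩

lemma midpoint_trigger_iff (lo hi a b rlo rhi u : 𝕜) :
    ((a + b) / 2 - (lo + hi) / 2 ≤ (rlo + rhi) / 2 + u ∧ rhi + u + lo < b ∨
      (rlo + rhi) / 2 + u ≤ (a + b) / 2 - (lo + hi) / 2 ∧ a < rlo + u + hi) ↔
      a < rlo + u + hi ∧ rhi + u + lo < b := by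
  constructor
  · rintro (⟨hright, hb⟩ | ⟨hleft, ha⟩) <;> constructor <;> linarith
  · rintro ⟨ha, hb⟩
    exact (le_total _ _).imp (⟨·, hb⟩) (⟨·, ha⟩)

variable [Fintype ι]

lemma measure_pi_add_mem_Icc_eq_Ioo (ν : ι → Measure ℝ) [∀ k, SigmaFinite (ν k)]
    [∀ k, NullSingletonClass (ν k)] (a b s : ι → ℝ) :
    Measure.pi ν {y | ∀ k, s k + y k ∈ Icc (a k) (b k)} =
      Measure.pi ν {y | ∀ k, s k + y k ∈ Ioo (a k) (b k)} := by
  have hIcc : {y | ∀ k, s k + y k ∈ Icc (a k) (b k)} = Icc (a - s) (b - s) := by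
    ext y
    simp only [mem_ofPred_eq, mem_Icc, sub_le_iff_le_add', le_sub_iff_add_le', Pi.le_def,
      Pi.add_apply, forall_and]
  have hIoo : {y | ∀ k, s k + y k ∈ Ioo (a k) (b k)} =
      univ.pi fun k ↦ Ioo ((a - s) k) ((b - s) k) := by
    ext y
    simp [lt_sub_iff_add_lt', sub_lt_iff_lt_add']
  rw [hIcc, hIoo, measure_congr Measure.univ_pi_Ioo_ae_eq_Icc]

theorem iInf_measure_pi_add_mem_Icc_pos_iff {ν : ι → Measure ℝ} [∀ k, SigmaFinite (ν k)]
    [∀ k, NullSingletonClass (ν k)] {lo hi : ι → ℝ} (hle : lo ≤ hi)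
    (hsupp : ∀ k, (ν k).support = Icc (lo k) (hi k)) {a b : ι → ℝ} (hab : ∀ k, a k < b k)
    {l h : ι → ℝ} (hlh : l ≤ h) :
    (0 < ⨅ s ∈ Icc l h, Measure.pi ν {y | ∀ k, s k + y k ∈ Icc (a k) (b k)}) ↔
      ∀ k, a k < l k + hi k ∧ h k + lo k < b k := by
  let W : Set ((ι → ℝ) × (ι → ℝ)) := {p | ∀ k, p.1 k + p.2 k ∈ Ioo (a k) (b k)}
  have hW : IsOpen W := by
    simp only [W, ofPred_forall]
    exact isOpen_iInter_of_finite fun k ↦ isOpen_Ioo.preimage (by fun_prop)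
  have hpi : (Measure.pi ν).support = Icc lo hi := by
    simp only [support_measure_pi, hsupp, pi_univ_Icc]
  calc (0 < ⨅ s ∈ Icc l h, Measure.pi ν {y | ∀ k, s k + y k ∈ Icc (a k) (b k)})
      ↔ 0 < ⨅ s ∈ Icc l h, Measure.pi ν {y | (s, y) ∈ W} := by
        simp only [measure_pi_add_mem_Icc_eq_Ioo, W, mem_ofPred_eq]
    _ ↔ ∀ s ∈ Icc l h, ({y | (s, y) ∈ W} ∩ Icc lo hi).Nonempty := by
        rw [iInf_measure_section_pos_iff hW isCompact_Icc, hpi]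
    _ ↔ ∀ s ∈ Icc l h, ∃ y ∈ Icc lo hi, ∀ k, s k + y k ∈ Ioo (a k) (b k) := by
        simp only [Set.Nonempty, mem_inter_iff, mem_ofPred_eq, W, and_comm]
    _ ↔ ∀ k, a k < l k + hi k ∧ h k + lo k < b k :=
        forall_Icc_exists_add_mem_Ioo_iff hlh hle hab

end Rectangle

theorem on_trigger_region_general {ι : Type*} [Fintype ι] (ν : ι → Measure ℝ)
    [∀ k, SigmaFinite (ν k)] [∀ k, NullSingletonClass (ν k)] {wlo whi : ι → ℝ}
    (hw : ∀ k, wlo k ≤ whi k) (hsupp : ∀ k, (ν k).support = Icc (wlo k) (whi k))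
    {a b rlo rhi : ι → ℝ} (hab : ∀ k, a k < b k) (hr : ∀ k, rlo k ≤ rhi k)
    {c : ι → ℝ} (hc : ∀ k, c k = (wlo k + whi k) / 2) (u : ι → ℝ) :
    (0 < ⨅ s ∈ {s : ι → ℝ | ∀ k, s k ∈ Icc (rlo k + u k) (rhi k + u k)},
      Measure.pi ν {y | ∀ k, s k + y k ∈ Icc (a k) (b k)}) ↔
    ∀ k, ((a k + b k) / 2 - c k ≤ (rlo k + rhi k) / 2 + u k ∧ rhi k + u k + wlo k < b k) ∨
      ((rlo k + rhi k) / 2 + u k ≤ (a k + b k) / 2 - c k ∧ a k < rlo k + u k + whi k) := by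
  have hrect : {s : ι → ℝ | ∀ k, s k ∈ Icc (rlo k + u k) (rhi k + u k)} =
      Icc (rlo + u) (rhi + u) := by
    ext s
    simp [Pi.le_def, forall_and]
  have hle : rlo + u ≤ rhi + u := fun k ↦ add_le_add_left (hr k) (u k)
  rw [hrect, iInf_measure_pi_add_mem_Icc_pos_iff hw hsupp hab hle]
  simp only [hc, midpoint_trigger_iff, Pi.add_apply]

/-- 'On' trigger-region characterization (Proposition 4): with
`c_k = (w̌_k + ŵ_k)/2`, the lower transition-probability bound from the shifted
position rectangle `∏ [ř_k + u_k, r̂_k + u_k]` into the target rectangle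
`∏ [a_k, b_k]` is strictly positive iff for every coordinate `k`:
either `(ř_k + r̂_k)/2 + u_k ≥ (a_k + b_k)/2 − c_k` and
`r̂_k + u_k + w̌_k < b_k`, or `(ř_k + r̂_k)/2 + u_k ≤ (a_k + b_k)/2 − c_k` and
`ř_k + u_k + ŵ_k > a_k`. -/
theorem on_trigger_region
    (n : ℕ)
    (wlo whi : Fin n → ℝ) (hw : ∀ k, wlo k < whi k)
    (f : Fin n → ℝ → ℝ)
    (hf_nonneg : ∀ k x, 0 ≤ f k x)
    (hf_int : ∀ k, Integrable (f k))
    (hf_prob : ∀ k, ∫ x, f k x = 1)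
    (hf_supp : ∀ k x, x ∉ Set.Icc (wlo k) (whi k) → f k x = 0)
    (hf_pos : ∀ k, ∀ x ∈ Set.Ioo (wlo k) (whi k), 0 < f k x)
    (a b rlo rhi : Fin n → ℝ)
    (hab : ∀ k, a k < b k) (hr : ∀ k, rlo k ≤ rhi k)
    (μ : Measure (Fin n → ℝ))
    (hμ : μ = Measure.pi fun k =>
      (volume : Measure ℝ).withDensity fun x => ENNReal.ofReal (f k x))
    (c : Fin n → ℝ) (hc : ∀ k, c k = (wlo k + whi k) / 2) :
    ∀ u : Fin n → ℝ,
      (0 < ⨅ s ∈ {s : Fin n → ℝ | ∀ k, s k ∈ Set.Icc (rlo k + u k) (rhi k + u k)},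
        μ {y | ∀ k, s k + y k ∈ Set.Icc (a k) (b k)}) ↔
      ∀ k, ((a k + b k) / 2 - c k ≤ (rlo k + rhi k) / 2 + u k ∧
              rhi k + u k + wlo k < b k) ∨
           ((rlo k + rhi k) / 2 + u k ≤ (a k + b k) / 2 - c k ∧
              a k < rlo k + u k + whi k) := by
  subst hμ
  exact on_trigger_region_general _ (fun k ↦ (hw k).le) (fun k ↦
    support_withDensity_eq_Icc (hf_int k).aemeasurable.ennreal_ofReal (hw k)
      (fun x hx ↦ by simp [hf_supp k x hx]) fun x hx ↦ by simp [hf_pos k x hx]) hab hr hc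
end

section
/- For every ℓ ∈ {1, …, m}, the greedy prefix sums satisfy Σ_{k≤ℓ} z_k = min( Σ_{k≤ℓ} T̂_k , 1 − Σ_{k>ℓ} Ť_k ), and for every feasible z' and every ℓ one has Σ_{k≤ℓ} z'_k ≤ Σ_{k≤ℓ} z_k; that is, the greedy assignment maximizes every prefix sum over the feasible set. -/
/-!
The prefix sum up to `i` of a greedy assignment is bounded by `∑ k ≤ i, hi k` and by
`c - ∑ k > i, lo k` by construction. If it misses the first bound, some `k ≤ i` has `z k ≠ hi k`;
at the last such `k` the remaining mass `c` was exhausted, up to the amounts `lo` reserved for the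
later indices. Between `k` and `i` the assignment takes the values `hi ≥ lo`, so it uses up at least
the reserved amounts, and the prefix sum up to `i` attains the second bound.
-/

variable {ι R : Type*} [LinearOrder ι] [LocallyFiniteOrderBot ι] [LocallyFiniteOrderTop ι]

section PrefixSuffix

variable [AddCommMonoid R]

theorem sum_Iic_add_sum_Ioi [Fintype ι] (f : ι → R) (i : ι) :
    ∑ k ∈ Finset.Iic i, f k + ∑ k ∈ Finset.Ioi i, f k = ∑ k, f k := by
  have hcompl : (Finset.Iic i)ᶜ = Finset.Ioi i := by
    ext k
    simp
  rw [← hcompl, Finset.sum_add_sum_compl]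

theorem sum_Iic_add_sum_Ioi_mono [PartialOrder R] [IsOrderedAddMonoid R] {f g : ι → R} {i j : ι}
    (hij : i ≤ j) (hgf : ∀ k ∈ Set.Ioc i j, g k ≤ f k) :
    ∑ k ∈ Finset.Iic i, f k + ∑ k ∈ Finset.Ioi i, g k ≤
      ∑ k ∈ Finset.Iic j, f k + ∑ k ∈ Finset.Ioi j, g k := by
  have hIoc : Finset.Ioi i \ Finset.Ioi j = Finset.Iic j \ Finset.Iic i := by
    ext k
    simp [and_comm]
  have hdiff : ∑ k ∈ Finset.Iic j \ Finset.Iic i, g k ≤ ∑ k ∈ Finset.Iic j \ Finset.Iic i, f k :=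
    Finset.sum_le_sum fun k hk => hgf k (by simpa [and_comm] using hk)
  rw [← Finset.sum_sdiff (Finset.Ioi_subset_Ioi hij), hIoc,
    ← Finset.sum_sdiff (Finset.Iic_subset_Iic.mpr hij), ← add_assoc,
    add_comm (∑ k ∈ Finset.Iic i, f k)]
  gcongr

end PrefixSuffix

variable [AddCommGroup R] [LinearOrder R]

/-- The greedy assignment `z` of a total mass `c` under the bounds `lo` and `hi`: going through the
indices in increasing order, each one receives as much as `hi` allows once the amounts `lo` are
reserved for all later indices. The recursion is encoded as the equation it imposes on `z`. -/
def IsGreedyAssignment (lo hi : ι → R) (c : R) (z : ι → R) : Prop :=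
  ∀ i, z i = min (hi i) (c - ∑ k ∈ Finset.Iio i, z k - ∑ k ∈ Finset.Ioi i, lo k)

namespace IsGreedyAssignment

variable {lo hi z : ι → R} {c : R}

theorem le_hi (hz : IsGreedyAssignment lo hi c z) : z ≤ hi :=
  fun i => (hz i).trans_le (min_le_left _ _)

theorem eq_hi_or_sum_Iic_eq (hz : IsGreedyAssignment lo hi c z) (i : ι) :
    z i = hi i ∨ ∑ k ∈ Finset.Iic i, z k = c - ∑ k ∈ Finset.Ioi i, lo k := by
  refine (min_choice _ _).imp (hz i).trans fun hmin => ?_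
  rw [← Finset.sum_Iio_add_eq_sum_Iic, (hz i).trans hmin]
  abel

variable [IsOrderedAddMonoid R]

theorem sum_Iic_le (hz : IsGreedyAssignment lo hi c z) (i : ι) :
    ∑ k ∈ Finset.Iic i, z k ≤ c - ∑ k ∈ Finset.Ioi i, lo k := by
  have hzi : z i ≤ c - ∑ k ∈ Finset.Iio i, z k - ∑ k ∈ Finset.Ioi i, lo k :=
    (hz i).trans_le (min_le_right _ _)
  rw [sub_right_comm, le_sub_iff_add_le'] at hzi
  rwa [Finset.sum_Iio_add_eq_sum_Iic] at hzi

theorem sum_Iic_eq_of_ne_hi (hz : IsGreedyAssignment lo hi c z) (hle : lo ≤ hi) {i j : ι}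
    (hji : j ≤ i) (hj : z j ≠ hi j) :
    ∑ k ∈ Finset.Iic i, z k = c - ∑ k ∈ Finset.Ioi i, lo k := by
  obtain ⟨l, ⟨hli, hl⟩, hmax⟩ :=
    ((Set.finite_Iic i).sep fun k => z k ≠ hi k).exists_maximal ⟨j, hji, hj⟩
  have hlo : ∀ k ∈ Set.Ioc l i, lo k ≤ z k := by
    rintro k ⟨hlk, hki⟩
    have hk : z k = hi k := by_contra fun hk => (hmax ⟨hki, hk⟩ hlk.le).not_gt hlk
    exact (hle k).trans_eq hk.symm
  refine (hz.sum_Iic_le i).antisymm (sub_le_iff_le_add.mpr ?_)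
  calc
    c = ∑ k ∈ Finset.Iic l, z k + ∑ k ∈ Finset.Ioi l, lo k :=
      (eq_sub_iff_add_eq.mp ((hz.eq_hi_or_sum_Iic_eq l).resolve_left hl)).symm
    _ ≤ ∑ k ∈ Finset.Iic i, z k + ∑ k ∈ Finset.Ioi i, lo k :=
      sum_Iic_add_sum_Ioi_mono hli hlo

theorem sum_Iic_eq_min (hz : IsGreedyAssignment lo hi c z) (hle : lo ≤ hi) (i : ι) :
    ∑ k ∈ Finset.Iic i, z k =
      min (∑ k ∈ Finset.Iic i, hi k) (c - ∑ k ∈ Finset.Ioi i, lo k) := by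
  refine (le_min (Finset.sum_le_sum fun k _ => hz.le_hi k) (hz.sum_Iic_le i)).antisymm ?_
  by_cases hsat : ∀ k ≤ i, z k = hi k
  · exact (min_le_left _ _).trans_eq
      (Finset.sum_congr rfl fun k hk => (hsat k (Finset.mem_Iic.mp hk)).symm)
  · push Not at hsat
    obtain ⟨j, hji, hj⟩ := hsat
    exact (min_le_right _ _).trans_eq (hz.sum_Iic_eq_of_ne_hi hle hji hj).symm

end IsGreedyAssignment

theorem greedy_assignment_prefix_sums_general [Fintype ι] [IsOrderedAddMonoid R]
    {lo hi z : ι → R} {c : R} (hle : lo ≤ hi) (hz : IsGreedyAssignment lo hi c z) :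
    (∀ i, ∑ k ∈ Finset.Iic i, z k =
      min (∑ k ∈ Finset.Iic i, hi k) (c - ∑ k ∈ Finset.Ioi i, lo k)) ∧
    (∀ z' ∈ Set.Icc lo hi, ∑ i, z' i ≤ c →
      ∀ i, ∑ k ∈ Finset.Iic i, z' k ≤ ∑ k ∈ Finset.Iic i, z k) := by
  refine ⟨hz.sum_Iic_eq_min hle, fun z' ⟨hlo, hhi⟩ hsum i => ?_⟩
  rw [hz.sum_Iic_eq_min hle]
  refine le_min (Finset.sum_le_sum fun k _ => hhi k) (le_sub_iff_add_le.mpr ?_)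
  calc
    ∑ k ∈ Finset.Iic i, z' k + ∑ k ∈ Finset.Ioi i, lo k
    _ ≤ ∑ k ∈ Finset.Iic i, z' k + ∑ k ∈ Finset.Ioi i, z' k := by gcongr; exact hlo _
    _ = ∑ k, z' k := sum_Iic_add_sum_Ioi z' i
    _ ≤ c := hsum

/-- The greedy probability assignment `z` of the interval value-iteration
algorithm maximizes every prefix sum over the feasible set, and its prefix
sums are given by `∑_{k ≤ ℓ} z k = min (∑_{k ≤ ℓ} T̂ k) (1 - ∑_{k > ℓ} Ť k)`. -/
theorem greedy_assignment_prefix_sums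
    (m : ℕ) (hm : 1 ≤ m)
    (Tlo Thi : Fin m → ℝ)
    (h0 : ∀ ℓ, 0 ≤ Tlo ℓ) (hle : ∀ ℓ, Tlo ℓ ≤ Thi ℓ)
    (hsumlo : ∑ ℓ, Tlo ℓ ≤ 1) (hsumhi : 1 ≤ ∑ ℓ, Thi ℓ)
    (z : Fin m → ℝ)
    (hz : ∀ ℓ, z ℓ = min (Thi ℓ)
      (1 - ∑ k ∈ Finset.Iio ℓ, z k - ∑ k ∈ Finset.Ioi ℓ, Tlo k)) :
    (∀ ℓ, ∑ k ∈ Finset.Iic ℓ, z k =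
      min (∑ k ∈ Finset.Iic ℓ, Thi k) (1 - ∑ k ∈ Finset.Ioi ℓ, Tlo k)) ∧
    (∀ z' : Fin m → ℝ, (∀ ℓ, Tlo ℓ ≤ z' ℓ ∧ z' ℓ ≤ Thi ℓ) → ∑ ℓ, z' ℓ = 1 →
      ∀ ℓ, ∑ k ∈ Finset.Iic ℓ, z' k ≤ ∑ k ∈ Finset.Iic ℓ, z k) := by
  have hgen := greedy_assignment_prefix_sums_general hle hz
  exact ⟨hgen.1, fun z' hb hsum => hgen.2 z' ⟨fun k => (hb k).1, fun k => (hb k).2⟩ hsum.le⟩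
end
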